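/- arXiv:2009.06809 — 3 statements merged into one kernel-verified Lean document; each statement's English description precedes it below -/
import Mathlib

section
/- Let X be a random vector in ℝ^d, d ≥ 1, such that E[exp(u·X)] < ∞ for every u ∈ ℝ^d. Then the rate function I_X is strictly convex on its effective domain D(I_X). -/
/-!
Write `K` for the logarithmic Laplace transform, `p_u = exp(u·x - K(u))` for the density of the
law tilted by `u`, and `H(p)` for the relative entropy of `p μ` with respect to `μ`. The proof is
an approximate form of the following: `I(v)` is the least `H(p)` over densities `p` with mean `v`,
and entropy is strictly convex.

Three facts carry it.

* `exists_tilt_near`: if `I(v) < ∞`, there are tilted laws with mean arbitrarily close to `v` and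
  entropy at most `I(v)`; the tilting parameter minimises `K(u) - u·v + (ε/2)‖u‖²`.
* `hellinger_le`: if `p_u` has mean `v'`, then `H(p_u) ≥ w·v' - K(w) + ∫ (√p_u - √p_w)² dμ` for
  every `w`. So if `w` nearly attains the supremum `I(v)`, the tilted laws approximating `v` are
  close to `p_w` in Hellinger distance.
* `exists_hellinger_modulus`: since all exponential moments are finite, laws of bounded entropy are
  uniformly integrable, so those that are Hellinger-close have close means.

Suppose `I` is affine on `[x, y]`, and let `w` nearly attain the supremum at the midpoint. Then `w`
nearly attains it at `x` and at `y` too. The tilted laws approximating `x` and those approximating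
`y` are therefore all close to `p_w`, hence to each other, and their means agree in the limit:
`x = y`.
-/

open MeasureTheory ProbabilityTheory Set Filter Topology
open scoped RealInnerProductSpace ENNReal ProbabilityTheory

noncomputable section

/-- The topological support of a measure on `ℝ^d`: the smallest closed set of full measure,
equivalently the set of points all of whose neighbourhoods have positive measure. -/
def msupp {d : ℕ} (μ : Measure (EuclideanSpace ℝ (Fin d))) : Set (EuclideanSpace ℝ (Fin d)) :=
  {x | ∀ U : Set (EuclideanSpace ℝ (Fin d)), IsOpen U → x ∈ U → 0 < μ U}

/-- The convex support `C_X` of a random vector with law `μ`. -/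
def convSupp {d : ℕ} (μ : Measure (EuclideanSpace ℝ (Fin d))) : Set (EuclideanSpace ℝ (Fin d)) :=
  convexHull ℝ (msupp μ)

/-- The logarithmic Laplace transform `K_X(u) = log E[exp(u·X)]`, with values in `(-∞, +∞]`. -/
def logLaplace {d : ℕ} (μ : Measure (EuclideanSpace ℝ (Fin d)))
    (u : EuclideanSpace ℝ (Fin d)) : EReal :=
  (∫⁻ x, ENNReal.ofReal (Real.exp ⟪u, x⟫) ∂μ).log

/-- The rate function `I_X(v) = sup_u (u·v - K_X(u))`. -/
def rateFn {d : ℕ} (μ : Measure (EuclideanSpace ℝ (Fin d)))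
    (v : EuclideanSpace ℝ (Fin d)) : EReal :=
  ⨆ u : EuclideanSpace ℝ (Fin d), ((⟪u, v⟫ : ℝ) : EReal) - logLaplace μ u

/-- The effective domain of an extended-real-valued function. -/
def edom {α : Type*} (f : α → EReal) : Set α := {x | f x < ⊤}

/-- The affine hyperplane with unit normal `ℓ` and offset `c`. -/
def hyp {d : ℕ} (ℓ : EuclideanSpace ℝ (Fin d)) (c : ℝ) : Set (EuclideanSpace ℝ (Fin d)) :=
  {v | ⟪ℓ, v⟫ = c}

/-- The hyperplane `{v : ℓ·v = c}` supports the convex set `C`: it meets `C` and `C` lies in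
one of the two closed half-spaces bounded by it. -/
def SupportsSet {d : ℕ} (ℓ : EuclideanSpace ℝ (Fin d)) (c : ℝ)
    (C : Set (EuclideanSpace ℝ (Fin d))) : Prop :=
  (hyp ℓ c ∩ C).Nonempty ∧ ((∀ x ∈ C, ⟪ℓ, x⟫ ≤ c) ∨ (∀ x ∈ C, c ≤ ⟪ℓ, x⟫))

/-- Orthogonal projection onto the hyperplane `{v : ℓ·v = c}` (for `‖ℓ‖ = 1`). -/
def projHyp {d : ℕ} (ℓ : EuclideanSpace ℝ (Fin d)) (c : ℝ)
    (v : EuclideanSpace ℝ (Fin d)) : EuclideanSpace ℝ (Fin d) :=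
  v + (c - ⟪ℓ, v⟫) • ℓ

/-- A face of a convex set: a convex subset `F ⊆ C` such that any closed segment of `C` having
a relative interior point in `F` has both endpoints in `F`. -/
def IsFaceOf {V : Type*} [AddCommGroup V] [Module ℝ V] (C F : Set V) : Prop :=
  Convex ℝ F ∧ IsExtreme ℝ C F

/-- A maximal proper face of a convex set: a nonempty proper face contained in no face
other than `C` and itself. -/
def IsMaxProperFace {V : Type*} [AddCommGroup V] [Module ℝ V] (C F : Set V) : Prop :=
  IsFaceOf C F ∧ F.Nonempty ∧ F ≠ C ∧
    ∀ F', IsFaceOf C F' → F'.Nonempty → F ⊆ F' → F' = C ∨ F' = F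

/-- `F*₊(C_X)`: the maximal proper faces of the convex support carrying positive probability. -/
def facesPlus {d : ℕ} (μ : Measure (EuclideanSpace ℝ (Fin d))) :
    Set (Set (EuclideanSpace ℝ (Fin d))) :=
  {C | IsMaxProperFace (convSupp μ) C ∧ 0 < μ C}

/-- `K_X` is steep: `|∇K_X(u_n)| → ∞` along every sequence in the interior of `D(K_X)`
converging to a boundary point of `D(K_X)`. -/
def Steep {d : ℕ} (μ : Measure (EuclideanSpace ℝ (Fin d))) : Prop :=
  ∀ (u : ℕ → EuclideanSpace ℝ (Fin d)) (u₀ : EuclideanSpace ℝ (Fin d)),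
    (∀ n, u n ∈ interior (edom (logLaplace μ))) → Tendsto u atTop (𝓝 u₀) →
    u₀ ∈ frontier (edom (logLaplace μ)) →
    Tendsto (fun n => ‖gradient (fun w => (logLaplace μ w).toReal) (u n)‖) atTop atTop

/-- Condition (a) of the projection property: for every hyperplane `L` supporting `C_X` with
`0 < P(X ∈ L) < 1`, the projections on `L` of the relative interiors of `D(K_X)` and
`D(K_{X|L})` coincide. -/
def CondA {d : ℕ} (μ : Measure (EuclideanSpace ℝ (Fin d))) : Prop :=
  ∀ (ℓ : EuclideanSpace ℝ (Fin d)) (c : ℝ), ‖ℓ‖ = 1 → SupportsSet ℓ c (convSupp μ) →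
    0 < μ (hyp ℓ c) → μ (hyp ℓ c) < 1 →
    projHyp ℓ c '' intrinsicInterior ℝ (edom (logLaplace μ)) =
      projHyp ℓ c '' intrinsicInterior ℝ (edom (logLaplace (μ[|hyp ℓ c])))

/-- Depth-`n` truncation of the (well-founded) recursive definition of the projection property. -/
def ProjPropN {d : ℕ} : ℕ → Measure (EuclideanSpace ℝ (Fin d)) → Prop
  | 0, μ => CondA μ
  | n + 1, μ => CondA μ ∧ ∀ C ∈ facesPlus μ, ProjPropN n (μ[|C])

/-- `K_X` has the projection property: condition (a) holds, and `K_{X|C}` has the projection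
property for every `C ∈ F*₊(C_X)`. (The recursion on the dimension of `C_X` terminates in at
most `d` steps, so this is equivalent to all finite-depth truncations holding.) -/
def ProjProp {d : ℕ} (μ : Measure (EuclideanSpace ℝ (Fin d))) : Prop :=
  ∀ n, ProjPropN n μ

/-- Depth-`n` truncation of the recursive definition of total steepness. -/
def TotallySteepN {d : ℕ} : ℕ → Measure (EuclideanSpace ℝ (Fin d)) → Prop
  | 0, μ => Steep μ
  | n + 1, μ => Steep μ ∧ ∀ C ∈ facesPlus μ, TotallySteepN n (μ[|C])

/-- `K_X` is totally steep: `K_X` is steep and `K_{X|C}` is totally steep for every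
`C ∈ F*₊(C_X)`. -/
def TotallySteep {d : ℕ} (μ : Measure (EuclideanSpace ℝ (Fin d))) : Prop :=
  ∀ n, TotallySteepN n μ

/-- `f` is strictly convex on `A`: `f` is affine on no nondegenerate segment contained in `A`. -/
def StrictlyConvexOnSet {d : ℕ} (f : EuclideanSpace ℝ (Fin d) → EReal)
    (A : Set (EuclideanSpace ℝ (Fin d))) : Prop :=
  ∀ x y : EuclideanSpace ℝ (Fin d), segment ℝ x y ⊆ A → x ≠ y →
    ¬ ∀ t : ℝ, t ∈ Icc (0 : ℝ) 1 →
      f ((1 - t) • x + t • y) = ((1 - t : ℝ) : EReal) * f x + ((t : ℝ) : EReal) * f y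

section RateFnProof

variable {d : ℕ} {μ : Measure (EuclideanSpace ℝ (Fin d))}

local notation "E" => EuclideanSpace ℝ (Fin d)

lemma integrable_fun_sub {f g : E → ℝ} (hf : Integrable f μ) (hg : Integrable g μ) :
    Integrable (fun x => f x - g x) μ := hf.sub hg

lemma exp_eq_exp_half_sq (t : ℝ) : Real.exp t = Real.exp (t / 2) ^ 2 := by
  rw [← Real.exp_nat_mul]
  congr 1
  push_cast
  ring

/-! ### Real-valued transforms -/

/-- The real-valued logarithmic Laplace transform `K`. It agrees with `logLaplace` when all
exponential moments are finite; `Real.log` and the Bochner integral give it junk values otherwise. -/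
def realLogLaplace (μ : Measure (EuclideanSpace ℝ (Fin d))) (u : EuclideanSpace ℝ (Fin d)) : ℝ :=
  Real.log (∫ x, Real.exp ⟪u, x⟫ ∂μ)

/-- The logarithm of the density `p_u = exp(u·x - K(u))`, with respect to `μ`, of the tilted law. -/
def logTilt (μ : Measure (EuclideanSpace ℝ (Fin d))) (u x : EuclideanSpace ℝ (Fin d)) : ℝ :=
  ⟪u, x⟫ - realLogLaplace μ u

lemma integrable_exp_of_lintegral
    (hfin : ∀ u : E, ∫⁻ x, ENNReal.ofReal (Real.exp ⟪u, x⟫) ∂μ < ⊤) (u : E) :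
    Integrable (fun x => Real.exp ⟪u, x⟫) μ := by
  refine ⟨by fun_prop, ?_⟩
  rw [hasFiniteIntegral_iff_ofReal (Eventually.of_forall fun x => (Real.exp_pos _).le)]
  exact hfin u

lemma integral_exp_inner_pos [IsProbabilityMeasure μ]
    (hint : ∀ u : E, Integrable (fun x => Real.exp ⟪u, x⟫) μ) (u : E) :
    0 < ∫ x, Real.exp ⟪u, x⟫ ∂μ := integral_exp_pos (hint u)

lemma logLaplace_eq_coe [IsProbabilityMeasure μ]
    (hint : ∀ u : E, Integrable (fun x => Real.exp ⟪u, x⟫) μ) (u : E) :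
    logLaplace μ u = (realLogLaplace μ u : EReal) := by
  unfold logLaplace realLogLaplace
  rw [← ofReal_integral_eq_lintegral_ofReal (hint u)
    (Eventually.of_forall fun x => (Real.exp_pos _).le)]
  rw [ENNReal.log_ofReal_of_pos (integral_exp_inner_pos hint u)]

/-- Where the rate function is finite it is a genuine real supremum. -/
lemma exists_isLUB_of_rateFn_lt_top [IsProbabilityMeasure μ]
    (hint : ∀ u : E, Integrable (fun x => Real.exp ⟪u, x⟫) μ) {v : E} (hv : rateFn μ v < ⊤) :
    ∃ A : ℝ, rateFn μ v = A ∧ IsLUB (range fun u : E => ⟪u, v⟫ - realLogLaplace μ u) A := by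
  have hval : rateFn μ v = ⨆ u : E, ((⟪u, v⟫ - realLogLaplace μ u : ℝ) : EReal) := by
    unfold rateFn
    simp only [logLaplace_eq_coe hint, EReal.coe_sub]
  have hle : ∀ u : E, ((⟪u, v⟫ - realLogLaplace μ u : ℝ) : EReal) ≤ rateFn μ v := fun u => by
    rw [hval]; exact le_iSup (fun u : E => ((⟪u, v⟫ - realLogLaplace μ u : ℝ) : EReal)) u
  have hbot : rateFn μ v ≠ ⊥ := fun h => by
    have := hle 0
    rw [h, le_bot_iff] at this
    exact EReal.coe_ne_bot _ this
  have hA : rateFn μ v = ((rateFn μ v).toReal : EReal) := (EReal.coe_toReal hv.ne hbot).symm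
  refine ⟨_, hA, ?_, ?_⟩
  · rintro _ ⟨u, rfl⟩
    have := hle u
    rw [hA] at this
    exact EReal.coe_le_coe_iff.1 this
  · intro b hb
    rw [← EReal.coe_le_coe_iff, ← hA, hval]
    exact iSup_le fun u => EReal.coe_le_coe_iff.2 (hb ⟨u, rfl⟩)

lemma integrable_inner_mul_exp
    (hint : ∀ u : E, Integrable (fun x => Real.exp ⟪u, x⟫) μ) (h u : E) :
    Integrable (fun x => ⟪h, x⟫ * Real.exp ⟪u, x⟫) μ := by
  refine ((hint (u + h)).add (hint (u - h))).mono' (by fun_prop) (Eventually.of_forall fun x => ?_)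
  simp only [Pi.add_apply, inner_add_left, inner_sub_left, Real.exp_add, Real.exp_sub,
    Real.norm_eq_abs, abs_mul, abs_of_pos (Real.exp_pos _)]
  have h1 := Real.add_one_le_exp ⟪h, x⟫
  have h2 := Real.add_one_le_exp (-⟪h, x⟫)
  have h3 : |⟪h, x⟫| ≤ Real.exp ⟪h, x⟫ + Real.exp (-⟪h, x⟫) := by
    rcases abs_cases ⟪h, x⟫ with ⟨e, _⟩ | ⟨e, _⟩ <;>
      linarith [Real.exp_pos ⟪h, x⟫, Real.exp_pos (-⟪h, x⟫)]
  rw [div_eq_mul_inv, ← Real.exp_neg]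
  nlinarith [Real.exp_pos ⟪u, x⟫]

lemma hasDerivAt_integral_exp
    (hint : ∀ u : E, Integrable (fun x => Real.exp ⟪u, x⟫) μ) (h u : E) :
    HasDerivAt (fun s : ℝ => ∫ x, Real.exp ⟪u + s • h, x⟫ ∂μ)
      (∫ x, ⟪h, x⟫ * Real.exp ⟪u, x⟫ ∂μ) 0 := by
  have hb : Integrable (fun x => |⟪h, x⟫ * Real.exp ⟪u + h, x⟫| + |⟪h, x⟫ * Real.exp ⟪u - h, x⟫|) μ :=
    (integrable_inner_mul_exp hint h (u + h)).abs.add (integrable_inner_mul_exp hint h (u - h)).abs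
  have key := (hasDerivAt_integral_of_dominated_loc_of_deriv_le (μ := μ)
    (F := fun (s : ℝ) x => Real.exp ⟪u + s • h, x⟫)
    (F' := fun (s : ℝ) x => ⟪h, x⟫ * Real.exp ⟪u + s • h, x⟫) (x₀ := (0 : ℝ))
    (Metric.ball_mem_nhds (0 : ℝ) one_pos)
    (Eventually.of_forall fun s => by fun_prop) (hint _) (by fun_prop)
    (Eventually.of_forall fun x s hs => ?_) hb
    (Eventually.of_forall fun x s hs => ?_)).2
  · simpa using key
  · rw [Metric.mem_ball, dist_zero_right, Real.norm_eq_abs, abs_lt] at hs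
    simp only [Real.norm_eq_abs, abs_mul, abs_of_pos (Real.exp_pos _), ← mul_add]
    refine mul_le_mul_of_nonneg_left ?_ (abs_nonneg _)
    simp only [inner_add_left, inner_sub_left, real_inner_smul_left]
    rcases le_total 0 ⟪h, x⟫ with hx | hx
    · refine le_add_of_le_of_nonneg (Real.exp_le_exp.2 ?_) (Real.exp_pos _).le
      nlinarith
    · refine le_add_of_nonneg_of_le (Real.exp_pos _).le (Real.exp_le_exp.2 ?_)
      nlinarith
  · have h1 : HasDerivAt (fun s : ℝ => ⟪u, x⟫ + s * ⟪h, x⟫) ⟪h, x⟫ s := by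
      simpa using ((hasDerivAt_id s).mul_const ⟪h, x⟫).const_add ⟪u, x⟫
    simpa [inner_add_left, real_inner_smul_left, mul_comm] using h1.exp

lemma continuous_realLogLaplace [IsProbabilityMeasure μ]
    (hint : ∀ u : E, Integrable (fun x => Real.exp ⟪u, x⟫) μ) :
    Continuous (realLogLaplace μ) := by
  have hconv : ConvexOn ℝ univ (fun u : E => ∫ x, Real.exp ⟪u, x⟫ ∂μ) := by
    refine ⟨convex_univ, fun u _ w _ a b ha hb hab => ?_⟩
    rw [smul_eq_mul, smul_eq_mul, ← integral_const_mul, ← integral_const_mul,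
      ← integral_add ((hint u).const_mul a) ((hint w).const_mul b)]
    refine integral_mono (hint _) (((hint u).const_mul a).add ((hint w).const_mul b)) fun x => ?_
    have := convexOn_exp.2 (mem_univ ⟪u, x⟫) (mem_univ ⟪w, x⟫) ha hb hab
    simpa [inner_add_left, real_inner_smul_left] using this
  have hc : Continuous (fun u : E => ∫ x, Real.exp ⟪u, x⟫ ∂μ) :=
    continuousOn_univ.1 (hconv.continuousOn isOpen_univ)
  exact hc.log fun u => (integral_exp_inner_pos hint u).ne'

lemma exp_logTilt [IsProbabilityMeasure μ]
    (hint : ∀ u : E, Integrable (fun x => Real.exp ⟪u, x⟫) μ) (u x : E) :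
    Real.exp (logTilt μ u x) = Real.exp ⟪u, x⟫ * (∫ x, Real.exp ⟪u, x⟫ ∂μ)⁻¹ := by
  rw [logTilt, realLogLaplace, Real.exp_sub, Real.exp_log (integral_exp_inner_pos hint u),
    div_eq_mul_inv]

lemma integrable_tilt [IsProbabilityMeasure μ]
    (hint : ∀ u : E, Integrable (fun x => Real.exp ⟪u, x⟫) μ) (u : E) :
    Integrable (fun x => Real.exp (logTilt μ u x)) μ := by
  simp only [exp_logTilt hint]
  exact (hint u).mul_const _

lemma integral_tilt [IsProbabilityMeasure μ]
    (hint : ∀ u : E, Integrable (fun x => Real.exp ⟪u, x⟫) μ) (u : E) :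
    ∫ x, Real.exp (logTilt μ u x) ∂μ = 1 := by
  simp only [exp_logTilt hint]
  rw [integral_mul_const, mul_inv_cancel₀ (integral_exp_inner_pos hint u).ne']

lemma integrable_inner_tilt [IsProbabilityMeasure μ]
    (hint : ∀ u : E, Integrable (fun x => Real.exp ⟪u, x⟫) μ) (h u : E) :
    Integrable (fun x => ⟪h, x⟫ * Real.exp (logTilt μ u x)) μ := by
  simp only [exp_logTilt hint, ← mul_assoc]
  exact (integrable_inner_mul_exp hint h u).mul_const _

lemma measurable_logTilt (u : E) : Measurable (logTilt μ u) := by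
  unfold logTilt
  fun_prop

/-! ### Tilted laws with prescribed mean -/

/-- Near-optimal tilts: a point `v` with finite rate `A` is approximated by means `v - r` of
tilted laws whose relative entropy `⟪u, v - r⟫ - K(u)` is at most `A`. The parameter `u` minimises
`K(u) - ⟪u, v⟫ + (ε / 2) ‖u‖²`, and `r = ε u`. -/
lemma exists_tilt_near [IsProbabilityMeasure μ]
    (hint : ∀ u : E, Integrable (fun x => Real.exp ⟪u, x⟫) μ) {v : E} {A : ℝ}
    (hA : ∀ u : E, ⟪u, v⟫ - realLogLaplace μ u ≤ A) {δ : ℝ} (hδ : 0 < δ) :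
    ∃ u r : E, ‖r‖ ≤ δ ∧ (∀ h : E, ∫ x, ⟪h, x⟫ * Real.exp (logTilt μ u x) ∂μ = ⟪h, v - r⟫) ∧
      ⟪u, v - r⟫ - realLogLaplace μ u ≤ A := by
  have hK0 : realLogLaplace μ 0 = 0 := by simp [realLogLaplace]
  have hA0 : 0 ≤ A := by simpa [hK0] using hA 0
  -- `ε` is chosen so that `2 A ε ≤ δ²`, which bounds `‖ε u‖` below.
  obtain ⟨ε, hε, hεA⟩ : ∃ ε : ℝ, 0 < ε ∧ 2 * A * ε ≤ δ ^ 2 := by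
    refine ⟨δ ^ 2 / (2 * A + 1), by positivity, ?_⟩
    rw [mul_div_assoc', div_le_iff₀ (by positivity)]
    nlinarith [sq_nonneg δ]
  let Φ : E → ℝ := fun u => realLogLaplace μ u - ⟪u, v⟫ + ε / 2 * ‖u‖ ^ 2
  have hΦc : Continuous Φ := by
    have := continuous_realLogLaplace hint
    fun_prop
  have hΦlim : Tendsto Φ (cocompact E) atTop := by
    have h1 : Tendsto (fun u : E => -A + ε / 2 * ‖u‖ ^ 2) (cocompact E) atTop := by
      refine tendsto_atTop_add_const_left _ _ (Tendsto.const_mul_atTop (by positivity) ?_)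
      exact (tendsto_pow_atTop two_ne_zero).comp tendsto_norm_cocompact_atTop
    refine tendsto_atTop_mono (fun u => ?_) h1
    have := hA u
    simp only [Φ]
    linarith
  obtain ⟨u, hu⟩ := hΦc.exists_forall_le hΦlim
  have hnorm : ε / 2 * ‖u‖ ^ 2 ≤ A := by
    have h0 := hu 0
    simp only [Φ, hK0, inner_zero_left, norm_zero] at h0
    have := hA u
    nlinarith
  refine ⟨u, ε • u, ?_, fun h => ?_, ?_⟩
  · rw [norm_smul, Real.norm_eq_abs, abs_of_pos hε]
    refine le_of_sq_le_sq ?_ hδ.le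
    nlinarith
  · have hM := integral_exp_inner_pos hint u
    have hder : HasDerivAt (fun s : ℝ => Φ (u + s • h))
        ((∫ x, ⟪h, x⟫ * Real.exp ⟪u, x⟫ ∂μ) / (∫ x, Real.exp ⟪u, x⟫ ∂μ) - ⟪h, v⟫
          + ε * ⟪u, h⟫) 0 := by
      have h1 : HasDerivAt (fun s : ℝ => realLogLaplace μ (u + s • h))
          ((∫ x, ⟪h, x⟫ * Real.exp ⟪u, x⟫ ∂μ) / (∫ x, Real.exp ⟪u, x⟫ ∂μ)) 0 := by
        have := (hasDerivAt_integral_exp hint h u).log (by simpa using hM.ne')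
        simpa [realLogLaplace] using this
      have h2 : HasDerivAt (fun s : ℝ => ⟪u, v⟫ + s * ⟪h, v⟫) ⟪h, v⟫ 0 := by
        simpa using ((hasDerivAt_id (0 : ℝ)).mul_const ⟪h, v⟫).const_add ⟪u, v⟫
      have h3 : HasDerivAt
          (fun s : ℝ => ε / 2 * (‖u‖ ^ 2 + s * (2 * ⟪u, h⟫) + s ^ 2 * ‖h‖ ^ 2))
          (ε * ⟪u, h⟫) 0 := by
        have := ((((hasDerivAt_id (0 : ℝ)).mul_const (2 * ⟪u, h⟫)).const_add (‖u‖ ^ 2)).add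
          (((hasDerivAt_id (0 : ℝ)).pow 2).mul_const (‖h‖ ^ 2))).const_mul (ε / 2)
        refine this.congr_deriv ?_
        simp only [id, one_mul, Nat.cast_ofNat]
        norm_num
        ring
      refine ((h1.sub h2).add h3).congr_of_eventuallyEq (Eventually.of_forall fun s => ?_)
      simp only [Φ, inner_add_left, real_inner_smul_left, Pi.add_apply, Pi.sub_apply,
        norm_add_sq_real, real_inner_smul_right, norm_smul, mul_pow, Real.norm_eq_abs, sq_abs]
      ring
    have hmin : IsLocalMin (fun s : ℝ => Φ (u + s • h)) 0 :=
      Eventually.of_forall fun s => by simpa using hu (u + s • h)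
    have hz := hmin.hasDerivAt_eq_zero hder
    simp only [exp_logTilt hint, ← mul_assoc]
    rw [integral_mul_const, ← div_eq_mul_inv, inner_sub_right, real_inner_smul_right,
      real_inner_comm u h]
    linarith
  · have := hA u
    rw [inner_sub_right, real_inner_smul_right, real_inner_self_eq_norm_sq]
    nlinarith [sq_nonneg ‖u‖]

/-! ### Entropy controls the Hellinger distance -/

lemma integrable_hellinger [IsProbabilityMeasure μ]
    (hint : ∀ u : E, Integrable (fun x => Real.exp ⟪u, x⟫) μ) (u w : E) :
    Integrable (fun x => (Real.exp (logTilt μ u x / 2) - Real.exp (logTilt μ w x / 2)) ^ 2) μ := by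
  have hu := measurable_logTilt (μ := μ) u
  have hw := measurable_logTilt (μ := μ) w
  refine ((integrable_tilt hint u).add (integrable_tilt hint w)).mono'
    (by fun_prop) (Eventually.of_forall fun x => ?_)
  rw [Real.norm_eq_abs, abs_of_nonneg (sq_nonneg _), Pi.add_apply, exp_eq_exp_half_sq (logTilt μ u x),
    exp_eq_exp_half_sq (logTilt μ w x)]
  nlinarith [mul_pos (Real.exp_pos (logTilt μ u x / 2)) (Real.exp_pos (logTilt μ w x / 2))]

/-- The relative entropy of one tilted law with respect to another dominates their squared
Hellinger distance; here the entropy is written through the mean `v` of the first one. -/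
lemma hellinger_le [IsProbabilityMeasure μ]
    (hint : ∀ u : E, Integrable (fun x => Real.exp ⟪u, x⟫) μ) {u v : E} (w : E)
    (hmean : ∀ h : E, ∫ x, ⟪h, x⟫ * Real.exp (logTilt μ u x) ∂μ = ⟪h, v⟫) :
    ∫ x, (Real.exp (logTilt μ u x / 2) - Real.exp (logTilt μ w x / 2)) ^ 2 ∂μ ≤
      (⟪u, v⟫ - realLogLaplace μ u) - (⟪w, v⟫ - realLogLaplace μ w) := by
  have i1 := integrable_inner_tilt hint (u - w) u
  have i2 := (integrable_tilt hint u).const_mul (realLogLaplace μ w - realLogLaplace μ u)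
  have i3 := integrable_tilt hint u
  have i4 := integrable_tilt hint w
  have hval : ∫ x, (⟪u - w, x⟫ * Real.exp (logTilt μ u x)
      + (realLogLaplace μ w - realLogLaplace μ u) * Real.exp (logTilt μ u x)
      - Real.exp (logTilt μ u x) + Real.exp (logTilt μ w x)) ∂μ =
      (⟪u, v⟫ - realLogLaplace μ u) - (⟪w, v⟫ - realLogLaplace μ w) := by
    rw [integral_add (integrable_fun_sub (i1.fun_add i2) i3) i4, integral_sub (i1.fun_add i2) i3, integral_add i1 i2,
      integral_const_mul, hmean, integral_tilt hint, integral_tilt hint, inner_sub_left]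
    ring
  rw [← hval]
  refine integral_mono (integrable_hellinger hint u w) ((integrable_fun_sub (i1.fun_add i2) i3).fun_add i4) fun x => ?_
  have hl : ⟪u - w, x⟫ = (logTilt μ u x - logTilt μ w x)
      - (realLogLaplace μ w - realLogLaplace μ u) := by
    simp only [logTilt, inner_sub_left]; ring
  dsimp only
  rw [hl, exp_eq_exp_half_sq (logTilt μ u x), exp_eq_exp_half_sq (logTilt μ w x)]
  set a := logTilt μ u x
  set b := logTilt μ w x
  -- The pointwise inequality is `1 + s ≤ exp s` at `s = (b - a) / 2`.
  have h1 : Real.exp (b / 2) = Real.exp (a / 2) * Real.exp (b / 2 - a / 2) := by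
    rw [← Real.exp_add]; congr 1; ring
  have h2 := Real.add_one_le_exp (b / 2 - a / 2)
  have h3 : Real.exp (a / 2) * (b / 2 - a / 2 + 1) ≤ Real.exp (b / 2) := by
    rw [h1]; exact mul_le_mul_of_nonneg_left h2 (Real.exp_pos _).le
  nlinarith [mul_le_mul_of_nonneg_left h3 (Real.exp_pos (a / 2)).le]

/-! ### Uniform integrability from bounded entropy -/

/-- The part of `|⟪w, x⟫|` above the level `R`. -/
def innerTail (w : EuclideanSpace ℝ (Fin d)) (R : ℝ) (x : EuclideanSpace ℝ (Fin d)) : ℝ :=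
  if R < |⟪w, x⟫| then |⟪w, x⟫| else 0

lemma innerTail_nonneg (w : E) (R : ℝ) (x : E) : 0 ≤ innerTail w R x := by
  unfold innerTail; split_ifs <;> positivity

lemma innerTail_le (w : E) (R : ℝ) (x : E) : innerTail w R x ≤ |⟪w, x⟫| := by
  unfold innerTail; split_ifs <;> [exact le_rfl; positivity]

lemma measurable_innerTail (w : E) (R : ℝ) : Measurable (innerTail w R) := by
  unfold innerTail
  refine Measurable.ite (measurableSet_lt (by fun_prop) (by fun_prop)) (by fun_prop) (by fun_prop)

lemma exp_innerTail_le (w : E) (R : ℝ) {l : ℝ} (hl : 0 ≤ l) (x : E) :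
    Real.exp (l * innerTail w R x) ≤ Real.exp ⟪l • w, x⟫ + Real.exp ⟪(-l) • w, x⟫ := by
  have h := mul_le_mul_of_nonneg_left (innerTail_le w R x) hl
  simp only [real_inner_smul_left]
  rcases abs_cases ⟪w, x⟫ with ⟨e, _⟩ | ⟨e, _⟩ <;> rw [e] at h
  · exact le_add_of_le_of_nonneg (Real.exp_le_exp.2 h) (Real.exp_pos _).le
  · exact le_add_of_nonneg_of_le (Real.exp_pos _).le (Real.exp_le_exp.2 (by linarith))

lemma integrable_exp_innerTail
    (hint : ∀ u : E, Integrable (fun x => Real.exp ⟪u, x⟫) μ) (w : E) (R : ℝ) {l : ℝ}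
    (hl : 0 ≤ l) : Integrable (fun x => Real.exp (l * innerTail w R x)) μ := by
  have := measurable_innerTail w R
  refine ((hint (l • w)).add (hint ((-l) • w))).mono' (by fun_prop)
    (Eventually.of_forall fun x => ?_)
  rw [Real.norm_eq_abs, abs_of_pos (Real.exp_pos _)]
  exact exp_innerTail_le w R hl x

/-- Finiteness of every exponential moment makes the exponential moments of the tails of
`⟪w, X⟫` converge to `1`. -/
lemma exists_exp_innerTail_le [IsProbabilityMeasure μ]
    (hint : ∀ u : E, Integrable (fun x => Real.exp ⟪u, x⟫) μ) (w : E) {l : ℝ} (hl : 0 ≤ l) :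
    ∃ R : ℝ, 0 < R ∧ ∫ x, Real.exp (l * innerTail w R x) ∂μ ≤ 2 := by
  have hlim : Tendsto (fun n : ℕ => ∫ x, Real.exp (l * innerTail w n x) ∂μ) atTop
      (𝓝 (∫ _, (1 : ℝ) ∂μ)) := by
    refine tendsto_integral_of_dominated_convergence
      (fun x => Real.exp ⟪l • w, x⟫ + Real.exp ⟪(-l) • w, x⟫)
      (fun n => (integrable_exp_innerTail hint w n hl).aestronglyMeasurable)
      ((hint _).add (hint _)) (fun n => Eventually.of_forall fun x => ?_)
      (Eventually.of_forall fun x => ?_)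
    · rw [Real.norm_eq_abs, abs_of_pos (Real.exp_pos _)]
      exact exp_innerTail_le w n hl x
    · refine tendsto_const_nhds.congr' ?_
      obtain ⟨N, hN⟩ := exists_nat_ge |⟪w, x⟫|
      filter_upwards [eventually_ge_atTop N] with n hn
      have : ¬ ((n : ℝ) < |⟪w, x⟫|) := not_lt.2 (hN.trans (by exact_mod_cast hn))
      simp [innerTail, this]
  have h1 : ∫ _, (1 : ℝ) ∂μ = 1 := by simp
  rw [h1] at hlim
  obtain ⟨n, hn, hn0⟩ := ((hlim.eventually (gt_mem_nhds one_lt_two)).and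
    (eventually_gt_atTop 0)).exists
  exact ⟨n, by exact_mod_cast hn0, hn.le⟩

lemma integrable_innerTail_tilt [IsProbabilityMeasure μ]
    (hint : ∀ u : E, Integrable (fun x => Real.exp ⟪u, x⟫) μ) (w : E) (R : ℝ) (u : E) :
    Integrable (fun x => innerTail w R x * Real.exp (logTilt μ u x)) μ := by
  have h1 := measurable_innerTail w R
  have h2 := measurable_logTilt (μ := μ) u
  refine (integrable_inner_tilt hint w u).mono (by fun_prop) (Eventually.of_forall fun x => ?_)
  simp only [norm_mul, Real.norm_eq_abs, abs_of_nonneg (innerTail_nonneg w R x)]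
  exact mul_le_mul_of_nonneg_right (innerTail_le w R x) (abs_nonneg _)

/-- The entropy inequality: the tail first moment of a tilted law is controlled by its relative
entropy and an exponential moment of the tail under `μ`. -/
lemma integral_innerTail_tilt_le [IsProbabilityMeasure μ]
    (hint : ∀ u : E, Integrable (fun x => Real.exp ⟪u, x⟫) μ) (w : E) (R : ℝ) {l : ℝ}
    (hl : 0 ≤ l) {u v : E}
    (hmean : ∀ h : E, ∫ x, ⟪h, x⟫ * Real.exp (logTilt μ u x) ∂μ = ⟪h, v⟫) :
    l * ∫ x, innerTail w R x * Real.exp (logTilt μ u x) ∂μ ≤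
      (⟪u, v⟫ - realLogLaplace μ u) - 1 + ∫ x, Real.exp (l * innerTail w R x) ∂μ := by
  have i1 := integrable_inner_tilt hint u u
  have i2 := (integrable_tilt hint u).const_mul (realLogLaplace μ u + 1)
  have i3 := integrable_exp_innerTail hint w R hl
  have hval : ∫ x, (⟪u, x⟫ * Real.exp (logTilt μ u x)
      - (realLogLaplace μ u + 1) * Real.exp (logTilt μ u x)
      + Real.exp (l * innerTail w R x)) ∂μ =
      (⟪u, v⟫ - realLogLaplace μ u) - 1 + ∫ x, Real.exp (l * innerTail w R x) ∂μ := by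
    rw [integral_add (integrable_fun_sub i1 i2) i3, integral_sub i1 i2, integral_const_mul, hmean,
      integral_tilt hint]
    ring
  rw [← hval, ← integral_const_mul]
  refine integral_mono ((integrable_innerTail_tilt hint w R u).const_mul l)
    ((integrable_fun_sub i1 i2).fun_add i3) fun x => ?_
  have hx : ⟪u, x⟫ = logTilt μ u x + realLogLaplace μ u := by simp [logTilt]
  dsimp only
  rw [hx]
  set a := logTilt μ u x
  set t := l * innerTail w R x with ht
  -- Young's inequality `s t ≤ s log s - s + exp t` with `s = exp a`.
  have h1 : Real.exp t = Real.exp a * Real.exp (t - a) := by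
    rw [← Real.exp_add]; congr 1; ring
  have h2 := mul_le_mul_of_nonneg_left (Real.add_one_le_exp (t - a)) (Real.exp_pos a).le
  have h3 : l * (innerTail w R x * Real.exp a) = t * Real.exp a := by rw [ht]; ring
  rw [← h1] at h2
  rw [h3]
  linarith

/-- Truncation of `⟪w, x⟫ (a² - b²)` at level `R`: above `R` the tail is used, below it
`R |a² - b²|` is split by the arithmetic-geometric mean inequality into a multiple of `(a - b)²`
and a small multiple of `a² + b²`. -/
lemma mul_sq_sub_le {w x : E} {R c a b : ℝ} (hR : 0 < R) (hc : 0 < c) (ha : 0 ≤ a) (hb : 0 ≤ b) :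
    ⟪w, x⟫ * a ^ 2 - ⟪w, x⟫ * b ^ 2 ≤ innerTail w R x * a ^ 2 + innerTail w R x * b ^ 2
      + c / 8 * a ^ 2 + c / 8 * b ^ 2 + 4 * R ^ 2 / c * (a - b) ^ 2 := by
  have hab : (a + b) ^ 2 ≤ 2 * (a ^ 2 + b ^ 2) := by nlinarith [sq_nonneg (a - b)]
  by_cases hx : R < |⟪w, x⟫|
  · have hpos : 0 ≤ 4 * R ^ 2 / c * (a - b) ^ 2 := by positivity
    simp only [innerTail, hx, if_true]
    nlinarith [mul_le_mul_of_nonneg_right (le_abs_self ⟪w, x⟫) (sq_nonneg a),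
      mul_le_mul_of_nonneg_right (neg_abs_le ⟪w, x⟫) (sq_nonneg b),
      mul_nonneg hc.le (sq_nonneg a), mul_nonneg hc.le (sq_nonneg b)]
  · have hx' := not_lt.1 hx
    have h1 : ⟪w, x⟫ * a ^ 2 - ⟪w, x⟫ * b ^ 2 ≤ R * |a - b| * (a + b) := by
      have : ⟪w, x⟫ * (a - b) ≤ R * |a - b| :=
        (le_abs_self _).trans (by rw [abs_mul]; gcongr)
      nlinarith [mul_le_mul_of_nonneg_right this (add_nonneg ha hb)]
    have h2 : R * |a - b| * (a + b) ≤ 4 * R ^ 2 / c * (a - b) ^ 2 + c / 16 * (a + b) ^ 2 := by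
      rw [← sq_abs (a - b)]
      have : 0 ≤ 4 / c * (R * |a - b| - c / 8 * (a + b)) ^ 2 := by positivity
      have e : 4 / c * (R * |a - b| - c / 8 * (a + b)) ^ 2 = 4 * R ^ 2 / c * |a - b| ^ 2
          + c / 16 * (a + b) ^ 2 - R * |a - b| * (a + b) := by
        field_simp
        ring
      linarith
    simp only [innerTail, hx, if_false]
    nlinarith [mul_le_mul_of_nonneg_left hab hc.le]

/-- Tilted laws of bounded entropy that are close in Hellinger distance have close means: bounded
entropy makes `⟪w, X⟫` uniformly integrable. -/
lemma exists_hellinger_modulus [IsProbabilityMeasure μ]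
    (hint : ∀ u : E, Integrable (fun x => Real.exp ⟪u, x⟫) μ) (w : E) {B c : ℝ} (hB : 0 ≤ B)
    (hc : 0 < c) :
    ∃ η : ℝ, 0 < η ∧ ∀ u₁ u₂ v₁ v₂ : E,
      (∀ h : E, ∫ x, ⟪h, x⟫ * Real.exp (logTilt μ u₁ x) ∂μ = ⟪h, v₁⟫) →
      (∀ h : E, ∫ x, ⟪h, x⟫ * Real.exp (logTilt μ u₂ x) ∂μ = ⟪h, v₂⟫) →
      ⟪u₁, v₁⟫ - realLogLaplace μ u₁ ≤ B → ⟪u₂, v₂⟫ - realLogLaplace μ u₂ ≤ B →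
      ∫ x, (Real.exp (logTilt μ u₁ x / 2) - Real.exp (logTilt μ u₂ x / 2)) ^ 2 ∂μ ≤ η →
      ⟪w, v₁ - v₂⟫ ≤ c := by
  -- `l` makes the two tail terms at most `c / 4` each.
  obtain ⟨l, hl, hlB⟩ : ∃ l : ℝ, 0 < l ∧ B + 1 ≤ l * (c / 4) :=
    ⟨(B + 1) / (c / 4), by positivity, (div_mul_cancel₀ _ (by positivity)).ge⟩
  obtain ⟨R, hR, hRl⟩ := exists_exp_innerTail_le hint w hl.le
  refine ⟨c ^ 2 / (16 * R ^ 2), by positivity, fun u₁ u₂ v₁ v₂ hm₁ hm₂ hb₁ hb₂ hH => ?_⟩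
  have t₁ := integral_innerTail_tilt_le hint w R hl.le hm₁
  have t₂ := integral_innerTail_tilt_le hint w R hl.le hm₂
  have t₁' : ∫ x, innerTail w R x * Real.exp (logTilt μ u₁ x) ∂μ ≤ c / 4 :=
    le_of_mul_le_mul_left (by linarith) hl
  have t₂' : ∫ x, innerTail w R x * Real.exp (logTilt μ u₂ x) ∂μ ≤ c / 4 :=
    le_of_mul_le_mul_left (by linarith) hl
  have hH' : 4 * R ^ 2 / c *
      ∫ x, (Real.exp (logTilt μ u₁ x / 2) - Real.exp (logTilt μ u₂ x / 2)) ^ 2 ∂μ ≤ c / 4 := by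
    refine (mul_le_mul_of_nonneg_left hH (by positivity)).trans_eq ?_
    field_simp
    norm_num
  have g₁ := integrable_innerTail_tilt hint w R u₁
  have g₂ := integrable_innerTail_tilt hint w R u₂
  have p₁ := (integrable_tilt hint u₁).const_mul (c / 8)
  have p₂ := (integrable_tilt hint u₂).const_mul (c / 8)
  have hh := (integrable_hellinger hint u₁ u₂).const_mul (4 * R ^ 2 / c)
  have m₁ := integrable_inner_tilt hint w u₁
  have m₂ := integrable_inner_tilt hint w u₂
  have hmono := integral_mono (integrable_fun_sub m₁ m₂)
    ((((g₁.fun_add g₂).fun_add p₁).fun_add p₂).fun_add hh) fun x => by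
      dsimp only
      rw [exp_eq_exp_half_sq (logTilt μ u₁ x), exp_eq_exp_half_sq (logTilt μ u₂ x)]
      have ha := Real.exp_pos (logTilt μ u₁ x / 2)
      have hb := Real.exp_pos (logTilt μ u₂ x / 2)
      exact mul_sq_sub_le hR hc ha.le hb.le
  rw [integral_add (((g₁.fun_add g₂).fun_add p₁).fun_add p₂) hh,
    integral_add ((g₁.fun_add g₂).fun_add p₁) p₂, integral_add (g₁.fun_add g₂) p₁,
    integral_add g₁ g₂, integral_sub m₁ m₂, hm₁, hm₂, integral_const_mul, integral_const_mul,
    integral_const_mul, integral_tilt hint, integral_tilt hint] at hmono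
  rw [inner_sub_right]
  linarith

end RateFnProof

/-- **Corollary 1.** If `E[exp(u·X)] < ∞` for every `u ∈ ℝ^d`, then `I_X` is strictly convex. -/
theorem strictlyConvex_rateFn_of_finite_laplace {d : ℕ} (hd : 1 ≤ d)
    (μ : Measure (EuclideanSpace ℝ (Fin d))) [IsProbabilityMeasure μ]
    (hfin : ∀ u : EuclideanSpace ℝ (Fin d),
      ∫⁻ x, ENNReal.ofReal (Real.exp ⟪u, x⟫) ∂μ < ⊤) :
    StrictlyConvexOnSet (rateFn μ) (edom (rateFn μ)) := by
  have hint := integrable_exp_of_lintegral hfin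
  intro x y hseg hxy haff
  obtain ⟨Ax, hAx, hLx⟩ := exists_isLUB_of_rateFn_lt_top hint (hseg (left_mem_segment ℝ x y))
  obtain ⟨Ay, hAy, hLy⟩ := exists_isLUB_of_rateFn_lt_top hint (hseg (right_mem_segment ℝ x y))
  have hmid := haff (1 / 2) ⟨by norm_num, by norm_num⟩
  set m : EuclideanSpace ℝ (Fin d) := (1 - (1 / 2 : ℝ)) • x + (1 / 2 : ℝ) • y with hm
  have hmseg : m ∈ segment ℝ x y :=
    ⟨1 - 1 / 2, 1 / 2, by norm_num, by norm_num, by norm_num, rfl⟩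
  obtain ⟨Am, hAm, hLm⟩ := exists_isLUB_of_rateFn_lt_top hint (hseg hmseg)
  have hA : Am = (Ax + Ay) / 2 := by
    rw [hAm, hAx, hAy] at hmid
    have : Am = (1 - 1 / 2) * Ax + 1 / 2 * Ay := by exact_mod_cast hmid
    rw [this]; ring
  have hlex : ∀ u, ⟪u, x⟫ - realLogLaplace μ u ≤ Ax := fun u => hLx.1 ⟨u, rfl⟩
  have hley : ∀ u, ⟪u, y⟫ - realLogLaplace μ u ≤ Ay := fun u => hLy.1 ⟨u, rfl⟩
  have hw : 0 < ‖x - y‖ := norm_pos_iff.2 (sub_ne_zero.2 hxy)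
  set D : ℝ := ‖x - y‖ ^ 2 with hD
  have hDpos : 0 < D := by positivity
  have hB : 0 ≤ max 0 (max Ax Ay) := le_max_left _ _
  obtain ⟨η, hη, hmod⟩ := exists_hellinger_modulus hint (x - y) hB (half_pos hDpos)
  -- `w` is nearly optimal at the midpoint, hence, by affinity, also at both end points.
  obtain ⟨_, ⟨w, rfl⟩, hwm, -⟩ := hLm.exists_between (sub_lt_self Am (by positivity : 0 < η / 12))
  have hwm' : ⟪w, m⟫ = (⟪w, x⟫ + ⟪w, y⟫) / 2 := by
    rw [hm, inner_add_right, real_inner_smul_right, real_inner_smul_right]; ring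
  have hwx := hlex w
  have hwy := hley w
  obtain ⟨δ, hδ, hδw, hδD⟩ : ∃ δ : ℝ, 0 < δ ∧ ‖w‖ * δ ≤ η / 12 ∧ ‖x - y‖ * δ < D / 4 := by
    have h1 : ∀ᶠ δ : ℝ in 𝓝[>] 0, ‖w‖ * δ < η / 12 :=
      (((continuous_const_mul ‖w‖).tendsto' 0 0 (by simp)).eventually
        (gt_mem_nhds (by positivity))).filter_mono nhdsWithin_le_nhds
    have h2 : ∀ᶠ δ : ℝ in 𝓝[>] 0, ‖x - y‖ * δ < D / 4 :=
      (((continuous_const_mul ‖x - y‖).tendsto' 0 0 (by simp)).eventually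
        (gt_mem_nhds (by positivity))).filter_mono nhdsWithin_le_nhds
    obtain ⟨δ, ⟨h1, h2⟩, h3⟩ := ((h1.and h2).and self_mem_nhdsWithin).exists
    exact ⟨δ, h3, h1.le, h2⟩
  obtain ⟨u₁, r₁, hr₁, hm₁, hb₁⟩ := exists_tilt_near hint hlex hδ
  obtain ⟨u₂, r₂, hr₂, hm₂, hb₂⟩ := exists_tilt_near hint hley hδ
  have hinner : ∀ z r : EuclideanSpace ℝ (Fin d), ‖r‖ ≤ δ → |⟪z, r⟫| ≤ ‖z‖ * δ := fun z r hr =>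
    (abs_real_inner_le_norm z r).trans (mul_le_mul_of_nonneg_left hr (norm_nonneg z))
  have hH₁ := hellinger_le hint w hm₁
  have hH₂ := hellinger_le hint w hm₂
  have hw₁ := abs_le.1 (hinner w r₁ hr₁)
  have hw₂ := abs_le.1 (hinner w r₂ hr₂)
  rw [inner_sub_right w x r₁] at hH₁
  rw [inner_sub_right w y r₂] at hH₂
  have hH : ∫ z, (Real.exp (logTilt μ u₁ z / 2) - Real.exp (logTilt μ u₂ z / 2)) ^ 2 ∂μ ≤ η := by
    have i₁ := (integrable_hellinger hint u₁ w).const_mul 2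
    have i₂ := (integrable_hellinger hint u₂ w).const_mul 2
    have h := integral_mono (integrable_hellinger hint u₁ u₂) (i₁.fun_add i₂) fun z => by
      dsimp only
      nlinarith [sq_nonneg ((Real.exp (logTilt μ u₁ z / 2) - Real.exp (logTilt μ w z / 2))
        + (Real.exp (logTilt μ u₂ z / 2) - Real.exp (logTilt μ w z / 2)))]
    rw [integral_add i₁ i₂, integral_const_mul, integral_const_mul] at h
    linarith
  have hfinal := hmod u₁ u₂ (x - r₁) (y - r₂) hm₁ hm₂
    (hb₁.trans ((le_max_left _ _).trans (le_max_right _ _)))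
    (hb₂.trans ((le_max_right _ _).trans (le_max_right _ _))) hH
  have hexp : ⟪x - y, x - r₁ - (y - r₂)⟫ = D - ⟪x - y, r₁⟫ + ⟪x - y, r₂⟫ := by
    rw [hD, ← real_inner_self_eq_norm_sq, ← inner_sub_right, ← inner_add_right]
    congr 1
    abel
  have hz₁ := abs_le.1 (hinner (x - y) r₁ hr₁)
  have hz₂ := abs_le.1 (hinner (x - y) r₂ hr₂)
  linarith

end
end

section
/- Let X be a random vector in ℝ^d, d ≥ 1, such that K_X has the projection property. Then D(I_X) ⊆ C_X, and D(I_X) = rint C_X ∪ ⋃_{C_1 ∈ F*_+(C_X)} rint C_{X|C_1} ∪ ⋃_{C_1 ∈ F*_+(C_X)} ⋃_{C_2 ∈ F*_+(C_{X|C_1})} rint C_{X|C_2} ∪ … ∪ ⋃ over all chains C_1 ∈ F*_+(C_X), C_2 ∈ F*_+(C_{X|C_1}), …, C_d ∈ F*_+(C_{X|C_{d−1}}) of rint C_{X|C_d}. -/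
/-!
The argument is an induction on the dimension of the convex support `C_X`, each step being the
identity `D(I_X) = rint C_X ∪ ⋃_{C ∈ F*₊(C_X)} D(I_{X|C})` (`edom_rateFn_eq_union`).

* `I_X(v) < ∞` means `exp(u·v) ≤ M E[exp(u·X)]` for all `u` and some finite `M`. Hence
  `D(I_X)` is convex, it is contained in the closure of `C_X`, and
  `D(I_{X|C}) ⊆ D(I_X)` whenever `P(X ∈ C) > 0`.
* By Jensen's inequality conditional means of `X` on small balls belong to `D(I_X)`, so `D(I_X)` is
  dense in `C_X`; being convex, it contains `rint C_X` (`intrinsicInterior_convSupp_subset`).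
* If `v ∈ D(I_X)` lies on a hyperplane `L` with unit normal `ℓ` that supports `C_X`, applying the
  bound to `u + n ℓ` and letting `n → ∞` gives `exp(u·v) ≤ M E[exp(u·X); X ∈ L]` for `u ∈ D(K_X)`.
  At `u = 0` this shows `P(X ∈ L) > 0`. Condition (a) of the projection property
  extends the bound to `rint D(K_{X|L})`, and convexity to `D(K_{X|L})`, so `v ∈ D(I_{X|L})`
  (`mem_edom_rateFn_cond_hyp`).
* A point of the closure of `C_X` outside `rint C_X` lies on such a hyperplane. The face it cuts out
  is contained in a maximal proper face, and maximal proper faces are themselves cut out by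
  supporting hyperplanes (`exists_maxProperFace`, `IsMaxProperFace.exists_exposing`), so they have
  smaller dimension (`IsMaxProperFace.finrank_vectorSpan_lt`).
-/

open MeasureTheory ProbabilityTheory Set Filter Topology
open scoped RealInnerProductSpace ENNReal ProbabilityTheory

noncomputable section

/-- The union `rint C_X ∪ ⋃_{C₁ ∈ F*₊(C_X)} (rint C_{X|C₁} ∪ ⋃_{C₂ ∈ F*₊(C_{X|C₁})} (… ))`
down to depth `n`. -/
def domUnionN {d : ℕ} : ℕ → Measure (EuclideanSpace ℝ (Fin d)) → Set (EuclideanSpace ℝ (Fin d))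
  | 0, μ => intrinsicInterior ℝ (convSupp μ)
  | n + 1, μ =>
      intrinsicInterior ℝ (convSupp μ) ∪ ⋃ C ∈ facesPlus μ, domUnionN n (μ[|C])

/-! ### Relative interiors, supporting hyperplanes and faces -/

section ConvexGeometry

variable {E : Type*} [NormedAddCommGroup E] [InnerProductSpace ℝ E]

lemma le_of_combo_eq {a b p q m : ℝ} (ha : 0 < a) (hb : 0 < b) (hab : a + b = 1) (hq : q ≤ m)
    (hm : a * p + b * q = m) : m ≤ p := by
  have h1 := mul_le_mul_of_nonneg_left hq hb.le
  have h2 : (a + b) * m = m := by rw [hab, one_mul]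
  exact le_of_mul_le_mul_left (by linarith) ha

/-- The points of `C` on a supporting hyperplane form a face of `C`. -/
lemma isFaceOf_exposed {C : Set E} (hC : Convex ℝ C) {ℓ : E} {c : ℝ}
    (hle : ∀ x ∈ C, ⟪ℓ, x⟫ ≤ c) : IsFaceOf C {x ∈ C | ⟪ℓ, x⟫ = c} := by
  refine ⟨?_, fun x hx => hx.1, ?_⟩
  · intro x hx y hy a b ha hb hab
    refine ⟨hC hx.1 hy.1 ha hb hab, ?_⟩
    rw [inner_add_right, inner_smul_right, inner_smul_right, hx.2, hy.2, ← add_mul, hab, one_mul]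
  · rintro x hx y hy z ⟨-, hz⟩ ⟨a, b, ha, hb, hab, rfl⟩
    refine ⟨hx, le_antisymm (hle x hx) (le_of_combo_eq ha hb hab (hle y hy) ?_)⟩
    rwa [inner_add_right, inner_smul_right, inner_smul_right] at hz

variable [FiniteDimensional ℝ E]

/-- A convex set `S` with `S ∩ aff C = C` and `rint C = aff C ∩ interior S`, which reduces statements
about relative interiors to ordinary interiors. It is the preimage of `C` under the orthogonal
projection onto `aff C`. -/
lemma exists_thickening {C : Set E} (hC : Convex ℝ C) (hne : C.Nonempty) :
    ∃ S : Set E, Convex ℝ S ∧ C ⊆ S ∧ (∀ x ∈ affineSpan ℝ C, x ∈ S → x ∈ C) ∧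
      ∀ x, x ∈ intrinsicInterior ℝ C ↔ x ∈ affineSpan ℝ C ∧ x ∈ interior S := by
  have : Nonempty (affineSpan ℝ C) :=
    let ⟨x, hx⟩ := hne; ⟨⟨x, subset_affineSpan ℝ C hx⟩⟩
  let p : E →ᴬ[ℝ] affineSpan ℝ C := EuclideanGeometry.orthogonalProjection (affineSpan ℝ C)
  have hp : ∀ x (hx : x ∈ affineSpan ℝ C), p x = ⟨x, hx⟩ := fun x hx =>
    EuclideanGeometry.orthogonalProjection_mem_subspace_eq_self ⟨x, hx⟩
  have hpC : ∀ x ∈ affineSpan ℝ C, ((p x : E) ∈ C ↔ x ∈ C) := fun x hx => by rw [hp x hx]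
  refine ⟨{x | (p x : E) ∈ C}, ?_, fun x hx => (hpC x (subset_affineSpan ℝ C hx)).2 hx,
    fun x hx h => (hpC x hx).1 h, fun x => ?_⟩
  · exact hC.affine_preimage ((affineSpan ℝ C).subtype.comp p.toAffineMap)
  · rw [mem_intrinsicInterior]
    constructor
    · rintro ⟨y, hy, rfl⟩
      refine ⟨y.2, ?_⟩
      have hopen : IsOpen (p ⁻¹' interior (((↑) : affineSpan ℝ C → E) ⁻¹' C)) :=
        isOpen_interior.preimage p.continuous
      refine interior_maximal (fun z hz => ?_) hopen ?_
      · exact interior_subset (s := ((↑) : affineSpan ℝ C → E) ⁻¹' C) hz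
      · rw [mem_preimage, hp y y.2]; exact hy
    · rintro ⟨hx, hxS⟩
      refine ⟨⟨x, hx⟩, ?_, rfl⟩
      refine interior_maximal (s := ((↑) : affineSpan ℝ C → E) ⁻¹' C)
        (t := ((↑) : affineSpan ℝ C → E) ⁻¹' interior {x | (p x : E) ∈ C}) (fun z hz => ?_)
        (isOpen_interior.preimage continuous_subtype_val) hxS
      have hz' : (z : E) ∈ {x | (p x : E) ∈ C} := interior_subset hz
      exact (hpC z z.2).1 hz'

lemma combo_mem_intrinsicInterior {C : Set E} (hC : Convex ℝ C) {x y : E}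
    (hx : x ∈ intrinsicInterior ℝ C) (hy : y ∈ C) {a b : ℝ} (ha : 0 < a) (hb : 0 ≤ b)
    (hab : a + b = 1) : a • x + b • y ∈ intrinsicInterior ℝ C := by
  obtain ⟨S, hS, hCS, -, hri⟩ := exists_thickening hC ⟨y, hy⟩
  rw [hri] at hx ⊢
  refine ⟨?_, hS.combo_interior_self_mem_interior hx.2 (hCS hy) ha hb hab⟩
  exact (affineSpan ℝ C).convex hx.1 (subset_affineSpan ℝ C hy) ha.le hb hab

/-- Segments ending at a relative interior point can be prolonged inside `C`. -/
lemma exists_openSegment_of_mem_intrinsicInterior {C : Set E} (hC : Convex ℝ C) {x y : E}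
    (hx : x ∈ intrinsicInterior ℝ C) (hy : y ∈ C) : ∃ z ∈ C, x ∈ openSegment ℝ y z := by
  obtain ⟨S, hS, hCS, hSC, hri⟩ := exists_thickening hC ⟨y, hy⟩
  obtain ⟨hxa, hxS⟩ := (hri x).1 hx
  have hcont : Tendsto (fun t : ℝ => x + t • (x - y)) (𝓝[>] 0) (𝓝 x) := by
    have : Continuous fun t : ℝ => x + t • (x - y) := by fun_prop
    have h := (this.tendsto 0).mono_left (nhdsWithin_le_nhds (s := Ioi 0))
    simpa using h
  obtain ⟨t, htS, ht⟩ := ((hcont.eventually (isOpen_interior.mem_nhds hxS)).and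
    self_mem_nhdsWithin).exists
  have ht : 0 < t := ht
  refine ⟨x + t • (x - y), hSC _ ?_ (interior_subset htS), ?_⟩
  · have := AffineSubspace.smul_vsub_vadd_mem (affineSpan ℝ C) t hxa
      (subset_affineSpan ℝ C hy) hxa
    simpa [add_comm] using this
  · refine ⟨t / (1 + t), 1 / (1 + t), by positivity, by positivity, by field_simp; ring, ?_⟩
    have h : (1 + t) ≠ 0 := by positivity
    have : (1 + t) • ((t / (1 + t)) • y + (1 / (1 + t)) • (x + t • (x - y))) = (1 + t) • x := by
      rw [smul_add, smul_smul, smul_smul, mul_div_cancel₀ _ h, mul_div_cancel₀ _ h]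
      module
    exact smul_right_injective E h this

/-- A linear functional maximal over `C` at a relative interior point is constant on `C`. -/
lemma inner_eq_of_le_of_mem_intrinsicInterior {C : Set E} (hC : Convex ℝ C) {x ℓ : E}
    (hx : x ∈ intrinsicInterior ℝ C) (hle : ∀ y ∈ C, ⟪ℓ, y⟫ ≤ ⟪ℓ, x⟫) {y : E} (hy : y ∈ C) :
    ⟪ℓ, y⟫ = ⟪ℓ, x⟫ := by
  obtain ⟨z, hz, a, b, ha, hb, hab, rfl⟩ := exists_openSegment_of_mem_intrinsicInterior hC hx hy
  have h1 := hle y hy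
  have h2 := hle z hz
  refine le_antisymm h1 (le_of_combo_eq ha hb hab h2 ?_)
  rw [inner_add_right, inner_smul_right, inner_smul_right]

lemma IsFaceOf.eq_of_mem_intrinsicInterior {C F : Set E} (hC : Convex ℝ C) (hF : IsFaceOf C F)
    {x : E} (hx : x ∈ intrinsicInterior ℝ C) (hxF : x ∈ F) : F = C := by
  refine hF.2.1.antisymm fun y hy => ?_
  obtain ⟨z, hz, hxz⟩ := exists_openSegment_of_mem_intrinsicInterior hC hx hy
  exact hF.2.2 hy hz hxF hxz

/-- Supporting hyperplane at a point outside the relative interior, with `C` not contained in the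
hyperplane. -/
lemma exists_supporting {C : Set E} (hC : Convex ℝ C) (hne : C.Nonempty) {v : E}
    (hv : v ∈ affineSpan ℝ C) (hvi : v ∉ intrinsicInterior ℝ C) :
    ∃ ℓ : E, ‖ℓ‖ = 1 ∧ (∀ x ∈ C, ⟪ℓ, x⟫ ≤ ⟪ℓ, v⟫) ∧ ∃ x ∈ C, ⟪ℓ, x⟫ < ⟪ℓ, v⟫ := by
  obtain ⟨S, hS, hCS, hSC, hri⟩ := exists_thickening hC hne
  obtain ⟨x₀, hx₀⟩ := hne.intrinsicInterior hC
  have hvS : v ∉ interior S := fun h => hvi ((hri v).2 ⟨hv, h⟩)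
  obtain ⟨f, hf⟩ := geometric_hahn_banach_open_point hS.interior isOpen_interior hvS
  have hx₀S := ((hri x₀).1 hx₀).2
  have hle : ∀ x ∈ S, f x ≤ f v := fun x hx => by
    have hx' : x ∈ closure (interior S) := by
      rw [hS.closure_interior_eq_closure_of_nonempty_interior ⟨x₀, hx₀S⟩]
      exact subset_closure hx
    exact closure_minimal (fun y hy => (hf y hy).le)
      (isClosed_le f.continuous continuous_const) hx'
  set w : E := (InnerProductSpace.toDual ℝ E).symm f with hw
  have hwf : ∀ x, ⟪w, x⟫ = f x := fun x => InnerProductSpace.toDual_symm_apply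
  have hlt := hf x₀ hx₀S
  have hw0 : w ≠ 0 := by
    intro h
    rw [← hwf, ← hwf, h] at hlt
    simp at hlt
  have hpos : 0 < ‖w‖⁻¹ := inv_pos.2 (norm_pos_iff.2 hw0)
  refine ⟨‖w‖⁻¹ • w, by simp [norm_smul, hw0], fun x hx => ?_, x₀, intrinsicInterior_subset hx₀, ?_⟩
  · simp only [real_inner_smul_left, hwf]
    exact mul_le_mul_of_nonneg_left (hle x (hCS hx)) hpos.le
  · simp only [real_inner_smul_left, hwf]
    exact mul_lt_mul_of_pos_left hlt hpos

/-- The supporting hyperplane of `C` at a relative interior point of a proper face contains that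
face. -/
lemma IsFaceOf.exists_exposing {C F : Set E} (hC : Convex ℝ C) (hF : IsFaceOf C F)
    (hne : F.Nonempty) (hFC : F ≠ C) :
    ∃ (ℓ : E) (c : ℝ), ‖ℓ‖ = 1 ∧ (∀ x ∈ C, ⟪ℓ, x⟫ ≤ c) ∧ (∀ x ∈ F, ⟪ℓ, x⟫ = c) ∧
      ∃ x ∈ C, ⟪ℓ, x⟫ < c := by
  obtain ⟨v, hv⟩ := hne.intrinsicInterior hF.1
  have hvF := intrinsicInterior_subset hv
  obtain ⟨ℓ, h1, hle, hlt⟩ := exists_supporting hC (hne.mono hF.2.1)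
    (subset_affineSpan ℝ C (hF.2.1 hvF)) fun h => hFC (hF.eq_of_mem_intrinsicInterior hC h hvF)
  exact ⟨ℓ, ⟪ℓ, v⟫, h1, hle, fun x hx => inner_eq_of_le_of_mem_intrinsicInterior hF.1 hv
    (fun y hy => hle y (hF.2.1 hy)) hx, hlt⟩

/-- Zorn's lemma applies since the union of a chain of proper faces is proper: it misses the relative
interior of `C`. -/
lemma exists_maxProperFace {C F : Set E} (hC : Convex ℝ C) (hF : IsFaceOf C F)
    (hne : F.Nonempty) (hFC : F ≠ C) : ∃ G, F ⊆ G ∧ IsMaxProperFace C G := by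
  obtain ⟨x₀, hx₀⟩ := (hne.mono hF.2.1).intrinsicInterior hC
  obtain ⟨G, hFG, hG⟩ := zorn_subset_nonempty {G | IsFaceOf C G ∧ G ≠ C} (by
    intro c hc hchain hcne
    refine ⟨⋃₀ c, ⟨⟨?_, ?_, ?_⟩, ?_⟩, fun s hs => subset_sUnion_of_mem hs⟩
    · exact hchain.directedOn.convex_sUnion fun A hA => (hc hA).1.1
    · exact sUnion_subset fun A hA => (hc hA).1.2.1
    · rintro x hx y hy z ⟨A, hA, hz⟩ hzs
      exact ⟨A, hA, (hc hA).1.2.2 hx hy hz hzs⟩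
    · intro h
      obtain ⟨A, hA, hxA⟩ : x₀ ∈ ⋃₀ c := h ▸ intrinsicInterior_subset hx₀
      exact (hc hA).2 ((hc hA).1.eq_of_mem_intrinsicInterior hC hx₀ hxA)) F ⟨hF, hFC⟩
  refine ⟨G, hFG, hG.prop.1, hne.mono hFG, hG.prop.2, fun F' hF' _ hGF' => ?_⟩
  by_cases h : F' = C
  · exact Or.inl h
  · exact Or.inr ((hG.le_of_ge ⟨hF', h⟩ hGF').antisymm hGF')

/-- Maximal proper faces are exposed. -/
lemma IsMaxProperFace.exists_exposing {C F : Set E} (hC : Convex ℝ C) (hF : IsMaxProperFace C F) :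
    ∃ (ℓ : E) (c : ℝ), ‖ℓ‖ = 1 ∧ (∀ x ∈ C, ⟪ℓ, x⟫ ≤ c) ∧ F = {x ∈ C | ⟪ℓ, x⟫ = c} ∧
      ∃ x ∈ C, ⟪ℓ, x⟫ < c := by
  obtain ⟨hF1, hne, hFC, hmax⟩ := hF
  obtain ⟨ℓ, c, h1, hle, heq, x, hx, hlt⟩ := hF1.exists_exposing hC hne hFC
  have hsub : F ⊆ {x ∈ C | ⟪ℓ, x⟫ = c} := fun y hy => ⟨hF1.2.1 hy, heq y hy⟩
  refine ⟨ℓ, c, h1, hle, ?_, x, hx, hlt⟩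
  rcases hmax _ (isFaceOf_exposed hC hle) (hne.mono hsub) hsub with h | h
  · exact absurd (h.ge hx).2 hlt.ne
  · exact h.symm

lemma IsMaxProperFace.finrank_vectorSpan_lt {C F : Set E} (hC : Convex ℝ C)
    (hF : IsMaxProperFace C F) :
    Module.finrank ℝ (vectorSpan ℝ F) < Module.finrank ℝ (vectorSpan ℝ C) := by
  obtain ⟨ℓ, c, -, -, hFeq, x, hx, hlt⟩ := hF.exists_exposing hC
  obtain ⟨y, hy⟩ := hF.2.1
  have hFC : F ⊆ C := hF.1.2.1
  refine Submodule.finrank_lt_finrank_of_lt ((vectorSpan_mono ℝ hFC).lt_of_ne fun h => ?_)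
  have hxy : x - y ∈ vectorSpan ℝ F := by
    rw [h]; exact vsub_mem_vectorSpan ℝ hx (hFC hy)
  have hker : vectorSpan ℝ F ≤ LinearMap.ker (innerₛₗ ℝ ℓ) := by
    rw [vectorSpan_def, Submodule.span_le]
    rintro _ ⟨a, ha, b, hb, rfl⟩
    rw [hFeq] at ha hb
    simp [inner_sub_right, ha.2, hb.2]
  have := hker hxy
  rw [hFeq] at hy
  simp [inner_sub_right, hy.2, sub_eq_zero] at this
  exact hlt.ne this

lemma closure_subset_affineSpan (C : Set E) : closure C ⊆ affineSpan ℝ C :=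
  closure_minimal (subset_affineSpan ℝ C) (AffineSubspace.closed_of_finiteDimensional _)

end ConvexGeometry

/-! ### Laplace transforms and effective domains -/

section LaplaceTransform

variable {d : ℕ}

local notation "𝔼" => EuclideanSpace ℝ (Fin d)

/-- The Laplace transform `u ↦ E[exp(u·X)]`, so that `logLaplace μ u = log (laplace μ u)`. -/
def laplace (μ : Measure 𝔼) (u : 𝔼) : ℝ≥0∞ := ∫⁻ x, ENNReal.ofReal (Real.exp ⟪u, x⟫) ∂μ

lemma measurable_ofReal_exp_inner (u : 𝔼) :
    Measurable fun x : 𝔼 => ENNReal.ofReal (Real.exp ⟪u, x⟫) := by fun_prop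

lemma laplace_zero (μ : Measure 𝔼) [IsProbabilityMeasure μ] : laplace μ 0 = 1 := by
  simp [laplace]

lemma laplace_ne_zero (μ : Measure 𝔼) [IsProbabilityMeasure μ] (u : 𝔼) : laplace μ u ≠ 0 := by
  intro h
  rw [laplace, lintegral_eq_zero_iff (measurable_ofReal_exp_inner u)] at h
  obtain ⟨x, hx⟩ := h.exists
  simp only [Pi.zero_apply, ENNReal.ofReal_eq_zero] at hx
  exact absurd hx (not_le.2 (Real.exp_pos _))

lemma mem_edom_logLaplace {μ : Measure 𝔼} {u : 𝔼} :
    u ∈ edom (logLaplace μ) ↔ laplace μ u ≠ ⊤ := by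
  change ENNReal.log (laplace μ u) < ⊤ ↔ _
  rw [lt_top_iff_ne_top, ne_eq, ENNReal.log_eq_top_iff]

/-- Finiteness of `I_X(v)` in multiplicative form: `exp(u·v) ≤ M E[exp(u·X)]` for all `u`, with a
finite constant `M`; the least one is `exp I_X(v)`. All later estimates are made in this form. -/
lemma mem_edom_rateFn {μ : Measure 𝔼} [IsProbabilityMeasure μ] {v : 𝔼} :
    v ∈ edom (rateFn μ) ↔
      ∃ M : ℝ≥0∞, M ≠ ⊤ ∧ ∀ u, ENNReal.ofReal (Real.exp ⟪u, v⟫) ≤ M * laplace μ u := by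
  have hbot : ∀ u, ENNReal.log (laplace μ u) ≠ ⊥ := fun u h =>
    laplace_ne_zero μ u (ENNReal.log_eq_bot_iff.1 h)
  change rateFn μ v < ⊤ ↔ _
  constructor
  · intro h
    obtain ⟨m, hm, -⟩ := EReal.lt_iff_exists_real_btwn.1 h
    refine ⟨ENNReal.ofReal (Real.exp m), ENNReal.ofReal_ne_top, fun u => ?_⟩
    have h1 : ((⟪u, v⟫ : ℝ) : EReal) - ENNReal.log (laplace μ u) ≤ m :=
      (le_iSup (fun u : 𝔼 => ((⟪u, v⟫ : ℝ) : EReal) - logLaplace μ u) u).trans hm.le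
    rw [EReal.sub_le_iff_le_add (Or.inl (hbot u)) (Or.inr (EReal.coe_ne_bot m))] at h1
    have h2 := EReal.exp_monotone h1
    rwa [EReal.exp_add, ENNReal.exp_log, EReal.exp_coe, EReal.exp_coe] at h2
  · rintro ⟨M, hM, h⟩
    refine lt_of_le_of_lt (b := ENNReal.log M) (iSup_le fun u => ?_)
      (lt_top_iff_ne_top.2 fun h => hM (ENNReal.log_eq_top_iff.1 h))
    have hM0 : M ≠ 0 := by
      rintro rfl
      simpa using h 0
    change ((⟪u, v⟫ : ℝ) : EReal) - ENNReal.log (laplace μ u) ≤ _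
    rw [EReal.sub_le_iff_le_add (Or.inl (hbot u))
      (Or.inr fun h => hM0 (ENNReal.log_eq_bot_iff.1 h)), ← ENNReal.log_mul_add]
    have h2 := ENNReal.log_monotone (h u)
    rwa [← EReal.exp_coe, EReal.log_exp] at h2

lemma exp_inner_combo_le (x u w : 𝔼) {a b : ℝ} (ha : 0 ≤ a) (hb : 0 ≤ b) (hab : a + b = 1) :
    ENNReal.ofReal (Real.exp ⟪a • u + b • w, x⟫) ≤
      ENNReal.ofReal a * ENNReal.ofReal (Real.exp ⟪u, x⟫) +
        ENNReal.ofReal b * ENNReal.ofReal (Real.exp ⟪w, x⟫) := by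
  rw [← ENNReal.ofReal_mul ha, ← ENNReal.ofReal_mul hb,
    ← ENNReal.ofReal_add (by positivity) (by positivity)]
  refine ENNReal.ofReal_le_ofReal ?_
  rw [inner_add_left, real_inner_smul_left, real_inner_smul_left]
  exact convexOn_exp.2 (mem_univ _) (mem_univ _) ha hb hab

lemma laplace_combo_le (μ : Measure 𝔼) (u w : 𝔼) {a b : ℝ} (ha : 0 ≤ a) (hb : 0 ≤ b)
    (hab : a + b = 1) :
    laplace μ (a • u + b • w) ≤ ENNReal.ofReal a * laplace μ u + ENNReal.ofReal b * laplace μ w := by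
  unfold laplace
  rw [← lintegral_const_mul _ (measurable_ofReal_exp_inner u),
    ← lintegral_const_mul _ (measurable_ofReal_exp_inner w),
    ← lintegral_add_left ((measurable_ofReal_exp_inner u).const_mul _)]
  exact lintegral_mono fun x => exp_inner_combo_le x u w ha hb hab

lemma convex_edom_logLaplace (μ : Measure 𝔼) : Convex ℝ (edom (logLaplace μ)) := by
  intro u hu w hw a b ha hb hab
  rw [mem_edom_logLaplace] at *
  exact ne_top_of_le_ne_top (ENNReal.add_ne_top.2 ⟨ENNReal.mul_ne_top ENNReal.ofReal_ne_top hu,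
    ENNReal.mul_ne_top ENNReal.ofReal_ne_top hw⟩) (laplace_combo_le μ u w ha hb hab)

lemma convex_edom_rateFn (μ : Measure 𝔼) [IsProbabilityMeasure μ] :
    Convex ℝ (edom (rateFn μ)) := by
  intro v hv w hw a b ha hb hab
  rw [mem_edom_rateFn] at *
  obtain ⟨M, hM, hv⟩ := hv
  obtain ⟨N, hN, hw⟩ := hw
  refine ⟨M + N, ENNReal.add_ne_top.2 ⟨hM, hN⟩, fun u => ?_⟩
  have ha1 : a ≤ 1 := by linarith
  have hb1 : b ≤ 1 := by linarith
  have h := exp_inner_combo_le u v w ha hb hab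
  simp only [real_inner_comm u] at h
  rw [add_mul]
  refine h.trans (add_le_add ?_ ?_)
  · exact (mul_le_of_le_one_left' (ENNReal.ofReal_le_one.2 ha1)).trans (hv u)
  · exact (mul_le_of_le_one_left' (ENNReal.ofReal_le_one.2 hb1)).trans (hw u)

lemma msupp_eq (μ : Measure 𝔼) : msupp μ = μ.support := by
  rw [Measure.support_eq_forall_isOpen]
  ext x
  exact ⟨fun h U hx hU => h U hU hx, fun h U hU hx => h U hx hU⟩

lemma ae_mem_msupp (μ : Measure 𝔼) : ∀ᵐ x ∂μ, x ∈ msupp μ := by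
  rw [msupp_eq]; exact Measure.support_mem_ae

lemma ae_mem_convSupp (μ : Measure 𝔼) : ∀ᵐ x ∂μ, x ∈ convSupp μ :=
  (ae_mem_msupp μ).mono fun _ hx => subset_convexHull ℝ _ hx

lemma convSupp_subset_of_isClosed {μ : Measure 𝔼} {S : Set 𝔼} (hS : IsClosed S)
    (hconv : Convex ℝ S) (h : ∀ᵐ x ∂μ, x ∈ S) : convSupp μ ⊆ S := by
  refine convexHull_min ?_ hconv
  rw [msupp_eq]
  exact Measure.support_subset_of_isClosed hS h

lemma convSupp_cond_subset (μ : Measure 𝔼) (C : Set 𝔼) : convSupp (μ[|C]) ⊆ convSupp μ := by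
  refine convexHull_mono ?_
  rw [msupp_eq, msupp_eq]
  exact Measure.AbsolutelyContinuous.support_mono cond_absolutelyContinuous

lemma convex_convSupp (μ : Measure 𝔼) : Convex ℝ (convSupp μ) := convex_convexHull ℝ _

lemma convSupp_nonempty (μ : Measure 𝔼) [IsProbabilityMeasure μ] : (convSupp μ).Nonempty :=
  (ae_mem_convSupp μ).exists

/-- If a functional `w` strictly separates `v` from `C_X`, the bound of `mem_edom_rateFn` fails along
the multiples of `w`. -/
lemma edom_rateFn_subset_closure (μ : Measure 𝔼) [IsProbabilityMeasure μ] :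
    edom (rateFn μ) ⊆ closure (convSupp μ) := by
  intro v hv
  by_contra hvC
  obtain ⟨f, c, hf, hfv⟩ := geometric_hahn_banach_closed_point
    (convex_convSupp μ).closure isClosed_closure hvC
  obtain ⟨M, hM, h⟩ := mem_edom_rateFn.1 hv
  set w : 𝔼 := (InnerProductSpace.toDual ℝ 𝔼).symm f with hw
  have hwf : ∀ x, ⟪w, x⟫ = f x := fun x => InnerProductSpace.toDual_symm_apply
  have key : ∀ n : ℕ, ENNReal.ofReal (Real.exp (n * (f v - c))) ≤ M := by
    intro n
    have h1 : laplace μ ((n : ℝ) • w) ≤ ENNReal.ofReal (Real.exp (n * c)) := by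
      calc laplace μ ((n : ℝ) • w) ≤ ∫⁻ _, ENNReal.ofReal (Real.exp (n * c)) ∂μ := by
            refine lintegral_mono_ae ((ae_mem_convSupp μ).mono fun x hx => ?_)
            have := (hf x (subset_closure hx)).le
            rw [real_inner_smul_left, hwf]
            gcongr
        _ = _ := by simp
    have h2 := (h ((n : ℝ) • w)).trans (mul_le_mul_right h1 M)
    rw [real_inner_smul_left, hwf] at h2
    rw [mul_sub, Real.exp_sub, ENNReal.ofReal_div_of_pos (Real.exp_pos _)]
    exact ENNReal.div_le_of_le_mul h2
  have hlim : Tendsto (fun n : ℕ => ENNReal.ofReal (Real.exp (n * (f v - c)))) atTop (𝓝 ⊤) := by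
    refine ENNReal.tendsto_ofReal_nhds_top.2 (Real.tendsto_exp_atTop.comp ?_)
    exact tendsto_natCast_atTop_atTop.atTop_mul_const (by linarith)
  exact hM (top_le_iff.1 (le_of_tendsto' hlim key))

/-- By Jensen's inequality, the conditional mean of `X` on a ball of positive probability lies in
`D(I_X)`; around a point of the support these means come arbitrarily close to it. -/
lemma msupp_subset_closure_edom (μ : Measure 𝔼) [IsProbabilityMeasure μ] :
    msupp μ ⊆ closure (edom (rateFn μ)) := by
  intro x hx
  rw [Metric.mem_closure_iff]
  intro ε hε
  set B : Set 𝔼 := Metric.closedBall x (ε / 2) with hB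
  have hBpos : 0 < μ B := (hx _ Metric.isOpen_ball (Metric.mem_ball_self (half_pos hε))).trans_le
    (measure_mono Metric.ball_subset_closedBall)
  have hBtop : μ B ≠ ⊤ := measure_ne_top μ B
  have hcomp : IsCompact B := isCompact_closedBall x _
  have hint : IntegrableOn (fun y : 𝔼 => y) B μ :=
    continuous_id.continuousOn.integrableOn_compact hcomp
  have hmem : (⨍ y in B, y ∂μ) ∈ B := (convex_closedBall x _).set_average_mem
    Metric.isClosed_closedBall hBpos.ne' hBtop
    (ae_restrict_mem Metric.isClosed_closedBall.measurableSet) hint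
  refine ⟨⨍ y in B, y ∂μ, ?_, ?_⟩
  · rw [mem_edom_rateFn]
    refine ⟨(μ B)⁻¹, ENNReal.inv_ne_top.2 hBpos.ne', fun u => ?_⟩
    have hcont : Continuous fun y : 𝔼 => Real.exp ⟪u, y⟫ := by fun_prop
    have hexp : IntegrableOn (fun y : 𝔼 => Real.exp ⟪u, y⟫) B μ :=
      hcont.continuousOn.integrableOn_compact hcomp
    have hconv : ConvexOn ℝ univ fun y : 𝔼 => Real.exp ⟪u, y⟫ :=
      convexOn_exp.comp_linearMap (innerₛₗ ℝ u)
    have hJ := hconv.map_set_average_le (f := fun y : 𝔼 => y) hcont.continuousOn isClosed_univ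
      hBpos.ne' hBtop (by simp) hint hexp
    calc ENNReal.ofReal (Real.exp ⟪u, ⨍ y in B, y ∂μ⟫)
        ≤ ENNReal.ofReal (⨍ y in B, Real.exp ⟪u, y⟫ ∂μ) := ENNReal.ofReal_le_ofReal hJ
      _ = (μ B)⁻¹ * ∫⁻ y in B, ENNReal.ofReal (Real.exp ⟪u, y⟫) ∂μ := by
          rw [setAverage_eq, smul_eq_mul, ENNReal.ofReal_mul (by positivity),
            ofReal_integral_eq_lintegral_ofReal hexp (by filter_upwards with y using by positivity),
            measureReal_def, ← ENNReal.toReal_inv,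
            ENNReal.ofReal_toReal (ENNReal.inv_ne_top.2 hBpos.ne')]
      _ ≤ (μ B)⁻¹ * laplace μ u := by gcongr; exact setLIntegral_le_lintegral _ _
  · rw [dist_comm]
    exact (Metric.mem_closedBall.1 hmem).trans_lt (half_lt_self hε)

/-- `D(I_X)` is a convex set that is dense in `C_X` and contained in its closure. A point of `rint C_X`
missing from `D(I_X)` would have a hyperplane supporting `D(I_X)`, hence `C_X`, at a relative
interior point; such a hyperplane would contain both sets. -/
lemma intrinsicInterior_convSupp_subset (μ : Measure 𝔼) [IsProbabilityMeasure μ] :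
    intrinsicInterior ℝ (convSupp μ) ⊆ edom (rateFn μ) := by
  intro v hv
  have hD := convex_edom_rateFn μ
  have hCD : convSupp μ ⊆ closure (edom (rateFn μ)) :=
    convexHull_min (msupp_subset_closure_edom μ) hD.closure
  have hvcl := hCD (intrinsicInterior_subset hv)
  by_contra hvD
  obtain ⟨ℓ, -, hle, x, hx, hlt⟩ := exists_supporting hD (closure_nonempty_iff.1 ⟨v, hvcl⟩)
    (closure_subset_affineSpan _ hvcl) fun h => hvD (intrinsicInterior_subset h)
  have hle' : ∀ y ∈ closure (edom (rateFn μ)), ⟪ℓ, y⟫ ≤ ⟪ℓ, v⟫ := fun y hy =>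
    closure_minimal (t := {y : 𝔼 | ⟪ℓ, y⟫ ≤ ⟪ℓ, v⟫}) hle
      (isClosed_le (by fun_prop) continuous_const) hy
  have heq : ∀ y ∈ convSupp μ, ⟪ℓ, y⟫ = ⟪ℓ, v⟫ := fun y hy =>
    inner_eq_of_le_of_mem_intrinsicInterior (convex_convSupp μ) hv
      (fun z hz => hle' z (hCD hz)) hy
  have : x ∈ {y : 𝔼 | ⟪ℓ, y⟫ = ⟪ℓ, v⟫} := closure_minimal heq
    (isClosed_eq (by fun_prop) continuous_const) (edom_rateFn_subset_closure μ hx)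
  exact hlt.ne this

lemma isClosed_hyp (ℓ : 𝔼) (c : ℝ) : IsClosed (hyp ℓ c) :=
  isClosed_eq (by fun_prop) continuous_const

lemma convex_hyp (ℓ : 𝔼) (c : ℝ) : Convex ℝ (hyp ℓ c) := by
  intro x hx y hy a b ha hb hab
  have hx : ⟪ℓ, x⟫ = c := hx
  have hy : ⟪ℓ, y⟫ = c := hy
  change ⟪ℓ, a • x + b • y⟫ = c
  rw [inner_add_right, inner_smul_right, inner_smul_right, hx, hy, ← add_mul, hab, one_mul]

/-- Exponential tilting in the direction of the normal: letting `n → ∞` in the bound for `u + n ℓ`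
concentrates the integral on the supporting hyperplane through `v`, by dominated convergence. -/
lemma exp_le_setLIntegral {μ : Measure 𝔼} {ℓ v : 𝔼} {M : ℝ≥0∞} (hM : M ≠ ⊤)
    (h : ∀ u, ENNReal.ofReal (Real.exp ⟪u, v⟫) ≤ M * laplace μ u)
    (hle : ∀ᵐ x ∂μ, ⟪ℓ, x⟫ ≤ ⟪ℓ, v⟫) {u : 𝔼} (hu : laplace μ u ≠ ⊤) :
    ENNReal.ofReal (Real.exp ⟪u, v⟫) ≤
      M * ∫⁻ x in hyp ℓ ⟪ℓ, v⟫, ENNReal.ofReal (Real.exp ⟪u, x⟫) ∂μ := by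
  set c := ⟪ℓ, v⟫ with hc
  set F : ℕ → 𝔼 → ℝ≥0∞ := fun n x => ENNReal.ofReal (Real.exp (⟪u, x⟫ + n * (⟪ℓ, x⟫ - c)))
  have hlim : Tendsto (fun n => ∫⁻ x, F n x ∂μ) atTop
      (𝓝 (∫⁻ x in hyp ℓ c, ENNReal.ofReal (Real.exp ⟪u, x⟫) ∂μ)) := by
    rw [← lintegral_indicator (isClosed_hyp ℓ c).measurableSet]
    refine tendsto_lintegral_of_dominated_convergence
      (fun x => ENNReal.ofReal (Real.exp ⟪u, x⟫)) (fun n => by fun_prop) (fun n => ?_) hu ?_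
    · filter_upwards [hle] with x hx
      refine ENNReal.ofReal_le_ofReal (Real.exp_le_exp.2 ?_)
      have : (n : ℝ) * (⟪ℓ, x⟫ - c) ≤ 0 :=
        mul_nonpos_of_nonneg_of_nonpos n.cast_nonneg (by linarith)
      linarith
    · filter_upwards [hle] with x hx
      by_cases hxL : x ∈ hyp ℓ c
      · have hxL' : ⟪ℓ, x⟫ = c := hxL
        simp [F, indicator_of_mem hxL, hxL']
      · rw [indicator_of_notMem hxL, ← ENNReal.ofReal_zero]
        have hlt : ⟪ℓ, x⟫ - c < 0 := by
          have := lt_of_le_of_ne hx hxL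
          linarith
        refine ENNReal.tendsto_ofReal (Real.tendsto_exp_atBot.comp ?_)
        exact tendsto_atBot_add_const_left _ _
          (tendsto_natCast_atTop_atTop.atTop_mul_const_of_neg hlt)
  refine ge_of_tendsto' (ENNReal.Tendsto.const_mul hlim (Or.inr hM)) fun n => ?_
  have hF : laplace μ (u + (n : ℝ) • ℓ) =
      ENNReal.ofReal (Real.exp (n * c)) * ∫⁻ x, F n x ∂μ := by
    rw [← lintegral_const_mul _ (by fun_prop)]
    refine lintegral_congr fun x => ?_
    rw [← ENNReal.ofReal_mul (Real.exp_pos _).le, ← Real.exp_add, inner_add_left,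
      real_inner_smul_left]
    congr 2
    ring
  have h1 := h (u + (n : ℝ) • ℓ)
  rw [hF, inner_add_left, real_inner_smul_left, ← hc, Real.exp_add, mul_comm (Real.exp ⟪u, v⟫),
    ENNReal.ofReal_mul (Real.exp_pos _).le, mul_left_comm] at h1
  exact (ENNReal.mul_le_mul_iff_right (by simp [Real.exp_pos]) ENNReal.ofReal_ne_top).1 h1

lemma laplace_cond {μ : Measure 𝔼} (C : Set 𝔼) (u : 𝔼) :
    laplace (μ[|C]) u = (μ C)⁻¹ * ∫⁻ x in C, ENNReal.ofReal (Real.exp ⟪u, x⟫) ∂μ := by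
  rw [laplace, ProbabilityTheory.cond, lintegral_smul_measure, smul_eq_mul]

lemma edom_rateFn_cond_subset {μ : Measure 𝔼} [IsProbabilityMeasure μ] {C : Set 𝔼}
    (hC : μ C ≠ 0) : edom (rateFn (μ[|C])) ⊆ edom (rateFn μ) := by
  have := cond_isProbabilityMeasure hC
  intro v hv
  rw [mem_edom_rateFn] at *
  obtain ⟨M, hM, h⟩ := hv
  refine ⟨M * (μ C)⁻¹, ENNReal.mul_ne_top hM (ENNReal.inv_ne_top.2 hC), fun u => (h u).trans ?_⟩
  rw [laplace_cond, mul_assoc]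
  gcongr
  exact setLIntegral_le_lintegral _ _

/-- A supporting hyperplane through a point of `D(I_X)` carries positive probability. -/
lemma measure_hyp_ne_zero {μ : Measure 𝔼} [IsProbabilityMeasure μ] {ℓ v : 𝔼}
    (hv : v ∈ edom (rateFn μ)) (hle : ∀ᵐ x ∂μ, ⟪ℓ, x⟫ ≤ ⟪ℓ, v⟫) : μ (hyp ℓ ⟪ℓ, v⟫) ≠ 0 := by
  obtain ⟨M, hM, h⟩ := mem_edom_rateFn.1 hv
  intro h0
  have := exp_le_setLIntegral hM h hle (u := 0) (by simp [laplace_zero])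
  rw [setLIntegral_measure_zero _ _ h0] at this
  simp at this

/-- Under condition (a), if `L` is a supporting hyperplane of `C_X` through `v ∈ D(I_X)` that does not
contain `C_X`, then `v ∈ D(I_{X|L})`. Tilting
bounds `exp(w·v)` by a multiple of `E[exp(w·X) | L]` for `w ∈ D(K_X)`. This bound is invariant under
`w ↦ w + s ℓ`, so condition (a) carries it to all of `rint D(K_{X|L})`, and convexity along segments
carries it from there to `D(K_{X|L})`. -/
lemma mem_edom_rateFn_cond_hyp {μ : Measure 𝔼} [IsProbabilityMeasure μ] (hA : CondA μ)
    {ℓ v : 𝔼} (hℓ : ‖ℓ‖ = 1) (hv : v ∈ edom (rateFn μ))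
    (hle : ∀ x ∈ convSupp μ, ⟪ℓ, x⟫ ≤ ⟪ℓ, v⟫) (hlt : ∃ x ∈ convSupp μ, ⟪ℓ, x⟫ < ⟪ℓ, v⟫) :
    v ∈ edom (rateFn (μ[|hyp ℓ ⟪ℓ, v⟫])) := by
  set c := ⟪ℓ, v⟫ with hc
  set L := hyp ℓ c with hL
  set ν := μ[|L] with hν
  have hleae : ∀ᵐ x ∂μ, ⟪ℓ, x⟫ ≤ c := (ae_mem_convSupp μ).mono hle
  have hL0 : μ L ≠ 0 := measure_hyp_ne_zero hv hleae
  have hνprob : IsProbabilityMeasure ν := cond_isProbabilityMeasure hL0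
  obtain ⟨M, hM, h⟩ := mem_edom_rateFn.1 hv
  have hL1 : μ L < 1 := by
    refine prob_le_one.lt_of_ne fun h1 => ?_
    have hae : ∀ᵐ x ∂μ, x ∈ L :=
      (mem_ae_iff_prob_eq_one (isClosed_hyp ℓ c).measurableSet).2 h1
    obtain ⟨x, hx, hxlt⟩ := hlt
    exact hxlt.ne (convSupp_subset_of_isClosed (isClosed_hyp ℓ c) (convex_hyp ℓ c) hae hx)
  have hsupp : SupportsSet ℓ c (convSupp μ) := by
    refine ⟨?_, Or.inl hle⟩
    -- `L` has positive probability, so it cannot miss the full-probability set `C_X`.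
    by_contra hemp
    rw [not_nonempty_iff_eq_empty] at hemp
    have hsub : L ⊆ {x | x ∉ convSupp μ} := fun x hx hxC =>
      (hemp.subset ⟨hx, hxC⟩ : x ∈ (∅ : Set 𝔼))
    exact hL0 (measure_mono_null hsub (ae_iff.1 (ae_mem_convSupp μ)))
  have hproj := hA ℓ c hℓ hsupp (pos_iff_ne_zero.2 hL0) hL1
  set N := M * μ L with hN
  have hNtop : N ≠ ⊤ := ENNReal.mul_ne_top hM (measure_ne_top μ L)
  have hint : ∀ u, M * ∫⁻ x in L, ENNReal.ofReal (Real.exp ⟪u, x⟫) ∂μ = N * laplace ν u := by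
    intro u
    rw [laplace_cond, hN, mul_assoc, ENNReal.mul_inv_cancel_left hL0 (measure_ne_top μ L)]
  have hri : ∀ u ∈ intrinsicInterior ℝ (edom (logLaplace ν)),
      ENNReal.ofReal (Real.exp ⟪u, v⟫) ≤ N * laplace ν u := by
    intro u hu
    obtain ⟨w, hw, hwu⟩ : projHyp ℓ c u ∈ projHyp ℓ c '' intrinsicInterior ℝ (edom (logLaplace μ)) :=
      hproj ▸ mem_image_of_mem _ hu
    have hw' := mem_edom_logLaplace.1 (intrinsicInterior_subset hw)
    have h1 := exp_le_setLIntegral hM h hleae hw'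
    obtain ⟨s, rfl⟩ : ∃ s : ℝ, u = w + s • ℓ := by
      refine ⟨(c - ⟪ℓ, w⟫) - (c - ⟪ℓ, u⟫), ?_⟩
      rw [sub_smul, ← add_sub_assoc]
      exact eq_sub_of_add_eq hwu.symm
    rw [← hint]
    have hshift : ∫⁻ x in L, ENNReal.ofReal (Real.exp ⟪w + s • ℓ, x⟫) ∂μ =
        ENNReal.ofReal (Real.exp (s * c)) * ∫⁻ x in L, ENNReal.ofReal (Real.exp ⟪w, x⟫) ∂μ := by
      rw [← lintegral_const_mul _ (measurable_ofReal_exp_inner w)]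
      refine setLIntegral_congr_fun (isClosed_hyp ℓ c).measurableSet fun x hx => ?_
      have hx : ⟪ℓ, x⟫ = c := hx
      rw [← ENNReal.ofReal_mul (Real.exp_pos _).le, ← Real.exp_add, inner_add_left,
        real_inner_smul_left, hx, add_comm]
    rw [hshift, inner_add_left, real_inner_smul_left, ← hc, add_comm, Real.exp_add,
      ENNReal.ofReal_mul (Real.exp_pos _).le, mul_left_comm]
    gcongr
  rw [mem_edom_rateFn]
  refine ⟨N, hNtop, fun u => ?_⟩
  have hN0 : N ≠ 0 := by
    intro hN0
    have h1 := exp_le_setLIntegral hM h hleae (u := 0) (by simp [laplace_zero])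
    rw [← hc, ← hL, hint, hN0] at h1
    simp at h1
  by_cases hu : laplace ν u = ⊤
  · rw [hu, ENNReal.mul_top hN0]; exact le_top
  have hconv := convex_edom_logLaplace ν
  have huD := mem_edom_logLaplace.2 hu
  obtain ⟨w, hw⟩ := Set.Nonempty.intrinsicInterior hconv ⟨u, huD⟩
  have hw' := mem_edom_logLaplace.1 (intrinsicInterior_subset hw)
  have hleft : Tendsto (fun t : ℝ => ENNReal.ofReal (Real.exp ⟪t • w + (1 - t) • u, v⟫)) (𝓝[>] 0)
      (𝓝 (ENNReal.ofReal (Real.exp ⟪u, v⟫))) := by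
    have hcont : Continuous fun t : ℝ => ENNReal.ofReal (Real.exp ⟪t • w + (1 - t) • u, v⟫) :=
      ENNReal.continuous_ofReal.comp (by fun_prop)
    have := (hcont.tendsto 0).mono_left (nhdsWithin_le_nhds (s := Ioi 0))
    simpa using this
  have hright : Tendsto (fun t : ℝ => N * (ENNReal.ofReal t * laplace ν w +
      ENNReal.ofReal (1 - t) * laplace ν u)) (𝓝[>] 0) (𝓝 (N * laplace ν u)) := by
    have e1 : Tendsto (fun t : ℝ => ENNReal.ofReal t) (𝓝[>] 0) (𝓝 0) := by
      have := (ENNReal.continuous_ofReal.tendsto 0).mono_left (nhdsWithin_le_nhds (s := Ioi 0))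
      simpa using this
    have e2 : Tendsto (fun t : ℝ => ENNReal.ofReal (1 - t)) (𝓝[>] 0) (𝓝 1) := by
      have hcont : Continuous fun t : ℝ => ENNReal.ofReal (1 - t) :=
        ENNReal.continuous_ofReal.comp (by fun_prop)
      have := (hcont.tendsto 0).mono_left (nhdsWithin_le_nhds (s := Ioi 0))
      simpa using this
    have := ENNReal.Tendsto.const_mul (a := N) ((ENNReal.Tendsto.mul_const e1 (Or.inr hw')).add
      (ENNReal.Tendsto.mul_const e2 (Or.inr hu))) (Or.inr hNtop)
    simpa using this
  -- Let `t → 0` in the bound at `t w + (1 - t) u`, a relative interior point of `D(K_{X|L})`.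
  refine le_of_tendsto_of_tendsto hleft hright ?_
  filter_upwards [Ioo_mem_nhdsGT (zero_lt_one' ℝ)] with t ht
  have h1t : 0 ≤ 1 - t := by linarith [ht.2]
  refine (hri _ (combo_mem_intrinsicInterior hconv hw huD ht.1 h1t (by ring))).trans ?_
  gcongr
  exact laplace_combo_le ν w u ht.1.le h1t (by ring)

/-- One step of the recursion. A point `v ∈ D(I_X)` outside `rint C_X` lies on a supporting hyperplane
`L` of positive probability. The face `L ∩ C_X` is contained in a maximal proper face `G`, which is
itself cut out by a hyperplane `H`; as `v` is in the closure of `C_{X|L} ⊆ G`, also `v ∈ H`, and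
`X|H` has the law of `X|G`. -/
lemma edom_rateFn_eq_union {μ : Measure 𝔼} [IsProbabilityMeasure μ] (hA : CondA μ) :
    edom (rateFn μ) =
      intrinsicInterior ℝ (convSupp μ) ∪ ⋃ C ∈ facesPlus μ, edom (rateFn (μ[|C])) := by
  have hC := convex_convSupp μ
  have hae := ae_mem_convSupp μ
  refine Subset.antisymm (fun v hv => ?_) (union_subset (intrinsicInterior_convSupp_subset μ)
    (iUnion₂_subset fun C hCf => edom_rateFn_cond_subset hCf.2.ne'))
  by_cases hvi : v ∈ intrinsicInterior ℝ (convSupp μ)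
  · exact Or.inl hvi
  right
  have hvcl := edom_rateFn_subset_closure μ hv
  obtain ⟨ℓ, hℓ, hle, x, hx, hxlt⟩ := exists_supporting hC (convSupp_nonempty μ)
    (closure_subset_affineSpan _ hvcl) hvi
  set L := hyp ℓ ⟪ℓ, v⟫ with hL
  have hL0 : μ L ≠ 0 := measure_hyp_ne_zero hv (hae.mono hle)
  have hvL := mem_edom_rateFn_cond_hyp hA hℓ hv hle ⟨x, hx, hxlt⟩
  have hface := isFaceOf_exposed hC hle
  have hFL : ({x ∈ convSupp μ | ⟪ℓ, x⟫ = ⟪ℓ, v⟫} : Set 𝔼) =ᵐ[μ] L := by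
    filter_upwards [hae] with y hy
    exact propext ⟨fun h => h.2, fun h => ⟨hy, h⟩⟩
  have hμF : 0 < μ {x ∈ convSupp μ | ⟪ℓ, x⟫ = ⟪ℓ, v⟫} := by
    rw [measure_congr hFL]; exact pos_iff_ne_zero.2 hL0
  obtain ⟨G, hFG, hG⟩ := exists_maxProperFace hC hface (nonempty_of_measure_ne_zero hμF.ne')
    fun h => hxlt.ne (h.ge hx).2
  have hGf : G ∈ facesPlus μ := ⟨hG, hμF.trans_le (measure_mono hFG)⟩
  obtain ⟨m, c, hm, hmle, hGeq, hmlt⟩ := hG.exists_exposing hC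
  have hvc : ⟪m, v⟫ = c := by
    have hνprob : IsProbabilityMeasure (μ[|L]) := cond_isProbabilityMeasure hL0
    have hsub : convSupp (μ[|L]) ⊆ hyp m c := by
      intro y hy
      have hyL : y ∈ L := convSupp_subset_of_isClosed (isClosed_hyp _ _) (convex_hyp _ _)
        (ae_cond_mem (isClosed_hyp _ _).measurableSet) hy
      have hyG : y ∈ G := hFG ⟨convSupp_cond_subset μ L hy, hyL⟩
      rw [hGeq] at hyG
      exact hyG.2
    exact closure_minimal hsub (isClosed_hyp m c) (edom_rateFn_subset_closure _ hvL)
  subst hvc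
  have hvG := mem_edom_rateFn_cond_hyp hA hm hv hmle hmlt
  have hGae : hyp m ⟪m, v⟫ =ᵐ[μ] G := by
    filter_upwards [hae] with y hy
    rw [hGeq]
    exact propext ⟨fun h => ⟨hy, h⟩, fun h => h.2⟩
  have hcond : μ[|hyp m ⟪m, v⟫] = μ[|G] := by
    rw [ProbabilityTheory.cond, ProbabilityTheory.cond, measure_congr hGae,
      Measure.restrict_congr_set hGae]
  rw [hcond] at hvG
  exact mem_biUnion hGf hvG

lemma ProjProp.condA {μ : Measure 𝔼} (h : ProjProp μ) : CondA μ := h 0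

lemma ProjProp.cond {μ : Measure 𝔼} (h : ProjProp μ) {C : Set 𝔼} (hC : C ∈ facesPlus μ) :
    ProjProp (μ[|C]) := fun n => (h (n + 1)).2 C hC

/-- Conditioning on a maximal proper face lowers the dimension of the convex support. -/
lemma finrank_convSupp_cond_lt {μ : Measure 𝔼} [IsProbabilityMeasure μ] {C : Set 𝔼}
    (hC : C ∈ facesPlus μ) :
    Module.finrank ℝ (vectorSpan ℝ (convSupp (μ[|C]))) <
      Module.finrank ℝ (vectorSpan ℝ (convSupp μ)) := by
  have hconv := convex_convSupp μ
  refine lt_of_le_of_lt (Submodule.finrank_mono (vectorSpan_mono ℝ ?_))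
    (hC.1.finrank_vectorSpan_lt hconv)
  obtain ⟨m, c, -, -, hCeq, -⟩ := hC.1.exists_exposing hconv
  have hcond : μ[|C] = μ[|hyp m c] := by
    have hae : C =ᵐ[μ] hyp m c := by
      filter_upwards [ae_mem_convSupp μ] with y hy
      rw [hCeq]
      exact propext ⟨fun h => h.2, fun h => ⟨hy, h⟩⟩
    rw [ProbabilityTheory.cond, ProbabilityTheory.cond, measure_congr hae,
      Measure.restrict_congr_set hae]
  intro y hy
  have hy1 := convSupp_cond_subset μ C hy
  rw [hcond] at hy
  rw [hCeq]
  exact ⟨hy1, convSupp_subset_of_isClosed (isClosed_hyp _ _) (convex_hyp _ _)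
    (ae_cond_mem (isClosed_hyp _ _).measurableSet) hy⟩

lemma edom_rateFn_eq_domUnionN (n : ℕ) : ∀ (μ : Measure 𝔼) [IsProbabilityMeasure μ],
    ProjProp μ → Module.finrank ℝ (vectorSpan ℝ (convSupp μ)) ≤ n →
      edom (rateFn μ) = domUnionN n μ := by
  induction n with
  | zero =>
    intro μ _ hμ hn
    rw [edom_rateFn_eq_union hμ.condA, domUnionN]
    -- A convex support of dimension `0` has no proper face.
    refine union_eq_left.2 (iUnion₂_subset fun C hC => ?_)
    have := finrank_convSupp_cond_lt hC
    omega
  | succ n ih =>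
    intro μ _ hμ hn
    rw [edom_rateFn_eq_union hμ.condA, domUnionN]
    congr 1
    refine iUnion₂_congr fun C hC => ?_
    have : IsProbabilityMeasure (μ[|C]) := cond_isProbabilityMeasure hC.2.ne'
    have := finrank_convSupp_cond_lt hC
    exact ih _ (hμ.cond hC) (by omega)

lemma domUnionN_subset_convSupp (n : ℕ) : ∀ μ : Measure 𝔼, domUnionN n μ ⊆ convSupp μ := by
  induction n with
  | zero => exact fun μ => intrinsicInterior_subset
  | succ n ih =>
    exact fun μ => union_subset intrinsicInterior_subset
      (iUnion₂_subset fun C _ => (ih _).trans (convSupp_cond_subset μ C))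

end LaplaceTransform

/-- **Corollary 2.** If `K_X` has the projection property, then `D(I_X) ⊆ C_X` and
`D(I_X) = rint C_X ∪ ⋃_{C₁ ∈ F*₊(C_X)} rint C_{X|C₁} ∪ … ∪ ⋃ rint C_{X|C_d}`
(the union over all chains `C₁ ∈ F*₊(C_X), …, C_d ∈ F*₊(C_{X|C_{d-1}})`). -/
theorem edom_rateFn_eq_union_of_projProp {d : ℕ} (hd : 1 ≤ d)
    (μ : Measure (EuclideanSpace ℝ (Fin d))) [IsProbabilityMeasure μ]
    (hproj : ProjProp μ) :
    edom (rateFn μ) ⊆ convSupp μ ∧ edom (rateFn μ) = domUnionN d μ := by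
  have h := edom_rateFn_eq_domUnionN d μ hproj
    ((Submodule.finrank_le _).trans_eq finrank_euclideanSpace_fin)
  exact ⟨h ▸ domUnionN_subset_convSupp d μ, h⟩

end
end

section
/- Let C ⊆ ℝ^n be a nonempty convex set. Then C \ rint C = ⋃_{C' ∈ F*(C)} C', i.e. the set of points of C that are not in its relative interior is exactly the union of the maximal proper faces of C. -/
/-!
A face `F` of `C` containing a relative interior point `p` is all of `C`: any `y ∈ C` can be
joined to `p` by a segment that stays in `C` slightly beyond `p`, so `p` is a relative interior
point of a segment of `C` with endpoint `y` (`exists_prolongation`, `face_eq_of_mem_rint`). Hence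
proper faces avoid the relative interior.

Conversely, let `x ∈ C` lie outside the relative interior, and fix a relative interior point `p`,
which exists because `C` is nonempty and convex in finite dimension. The points `y ∈ C` such that
the segment from `y` to `x` can be prolonged beyond `x` inside `C` form a face `pointFace C x`.
It does not contain `p`, since a point strictly between a relative interior point and a point of
`C` is again in the relative interior (`mem_rint_of_prolongation`). Zorn's lemma, applied to the
faces that avoid `p`, enlarges `pointFace C x` to a maximal one; as a face is proper exactly when
it avoids `p`, the result is a maximal proper face containing `x`.
-/

open MeasureTheory ProbabilityTheory Set Filter Topology
open scoped RealInnerProductSpace ENNReal ProbabilityTheory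

noncomputable section

section Faces

variable {V : Type*} [NormedAddCommGroup V] [NormedSpace ℝ V]

/-- Every segment from a point of `C` to a relative interior point of `C` can be prolonged within
`C`. -/
theorem exists_prolongation {C : Set V} {p y : V}
    (hp : p ∈ intrinsicInterior ℝ C) (hy : y ∈ C) :
    ∃ ε : ℝ, 0 < ε ∧ p + ε • (p - y) ∈ C := by
  obtain ⟨q, hq, rfl⟩ := mem_intrinsicInterior.1 hp
  let y' : affineSpan ℝ C := ⟨y, subset_affineSpan ℝ C hy⟩
  have : Nonempty (affineSpan ℝ C) := ⟨y'⟩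
  let f : ℝ → affineSpan ℝ C := fun t => AffineMap.lineMap y' q (1 + t)
  have hf : Continuous f :=
    AffineMap.lineMap_continuous.comp (continuous_const.add continuous_id)
  have hf0 : f 0 = q := by simp [f]
  have hmem : ∀ᶠ t in 𝓝 (0 : ℝ), f t ∈ ((↑) ⁻¹' C : Set (affineSpan ℝ C)) := by
    apply hf.continuousAt
    rw [hf0]
    exact mem_interior_iff_mem_nhds.1 hq
  obtain ⟨ε, hεC, hε⟩ :=
    ((hmem.filter_mono nhdsWithin_le_nhds).and self_mem_nhdsWithin :
      ∀ᶠ t in 𝓝[>] (0 : ℝ), _ ∧ t ∈ Ioi (0 : ℝ)).exists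
  refine ⟨ε, hε, ?_⟩
  have hval : ((f ε : affineSpan ℝ C) : V) = (q : V) + ε • ((q : V) - y) := by
    simp only [f, AffineMap.lineMap_apply, AffineSubspace.coe_vadd, vadd_eq_add,
      Submodule.coe_smul, AffineSubspace.coe_vsub, vsub_eq_sub, y']
    module
  rw [← hval]
  exact hεC

/-- A point strictly between a relative interior point `p` of `C` and a point of `C` is a relative
interior point: a homothety centred at the latter maps a relative neighbourhood of `p` into `C`. -/
theorem mem_rint_of_prolongation {C : Set V} (hC : Convex ℝ C) {p x : V} {ε : ℝ} (hε : 0 < ε)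
    (hp : p ∈ intrinsicInterior ℝ C) (hz : x + ε • (x - p) ∈ C) :
    x ∈ intrinsicInterior ℝ C := by
  obtain ⟨q, hq, rfl⟩ := mem_intrinsicInterior.1 hp
  set z : V := x + ε • (x - (q : V)) with hzdef
  let z' : affineSpan ℝ C := ⟨z, subset_affineSpan ℝ C hz⟩
  have : Nonempty (affineSpan ℝ C) := ⟨z'⟩
  have hε1 : 1 + ε ≠ 0 := by positivity
  -- Solving `z = x + ε (x - q)` for `x` shows that this homothety takes `q` to `x`.
  set t : ℝ := ε / (1 + ε) with ht
  have ht0 : 0 < t := by positivity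
  have ht1 : t ≤ 1 := by rw [ht, div_le_one (by positivity)]; linarith
  have hval : ∀ w : affineSpan ℝ C,
      ((AffineMap.homothety z' t w : affineSpan ℝ C) : V) = (1 - t) • z + t • (w : V) := by
    intro w
    simp only [AffineMap.homothety_apply, AffineSubspace.coe_vadd, vadd_eq_add,
      Submodule.coe_smul, AffineSubspace.coe_vsub, vsub_eq_sub, z']
    module
  refine mem_intrinsicInterior.2 ⟨AffineMap.homothety z' t q, ?_, ?_⟩
  · refine mem_interior.2 ⟨_, ?_,
      AffineMap.homothety_isOpenMap z' t ht0.ne' _ isOpen_interior, mem_image_of_mem _ hq⟩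
    rintro _ ⟨w, hw, rfl⟩
    rw [mem_preimage, hval]
    have hwC : (w : V) ∈ C := interior_subset (s := ((↑) ⁻¹' C : Set (affineSpan ℝ C))) hw
    exact hC hz hwC (by linarith) ht0.le (by ring)
  · rw [hval, hzdef, ht]
    match_scalars <;> field_simp <;> ring

theorem face_eq_of_mem_rint {C F : Set V} (hF : IsFaceOf C F) {p : V}
    (hp : p ∈ intrinsicInterior ℝ C) (hpF : p ∈ F) : F = C := by
  refine hF.2.subset.antisymm fun y hy => ?_
  obtain ⟨ε, hε, hz⟩ := exists_prolongation hp hy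
  refine hF.2.left_mem_of_mem_openSegment hy hz hpF ?_
  refine ⟨ε / (1 + ε), 1 / (1 + ε), by positivity, by positivity, by field_simp; ring, ?_⟩
  match_scalars <;> field_simp <;> ring

/-- The set of points `y ∈ C` for which the segment from `y` to `x` can be prolonged beyond `x`
within `C`. For `x ∈ C` it is the smallest face of `C` containing `x`. -/
def pointFace (C : Set V) (x : V) : Set V :=
  {y | y ∈ C ∧ ∃ ε : ℝ, 0 < ε ∧ x + ε • (x - y) ∈ C}

theorem mem_pointFace_self {C : Set V} {x : V} (hx : x ∈ C) : x ∈ pointFace C x :=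
  ⟨hx, 1, one_pos, by simpa using hx⟩

theorem isFaceOf_pointFace {C : Set V} (hC : Convex ℝ C) {x : V} (hx : x ∈ C) :
    IsFaceOf C (pointFace C x) := by
  -- A prolongation can be shortened, by convexity.
  have shrink : ∀ {y : V} {ε δ : ℝ}, 0 < ε → 0 < δ → δ ≤ ε → x + ε • (x - y) ∈ C →
      x + δ • (x - y) ∈ C := by
    intro y ε δ hε hδ hle h
    have h1 : δ / ε ≤ 1 := (div_le_one hε).2 hle
    have := hC hx h (b := δ / ε) (sub_nonneg.2 h1) (by positivity) (by ring)
    convert this using 1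
    match_scalars <;> field_simp <;> ring
  refine ⟨?_, fun y hy => hy.1, ?_⟩
  · rintro y₁ ⟨hy₁, ε₁, hε₁, h₁⟩ y₂ ⟨hy₂, ε₂, hε₂, h₂⟩ a b ha hb hab
    have hm : 0 < min ε₁ ε₂ := lt_min hε₁ hε₂
    refine ⟨hC hy₁ hy₂ ha hb hab, min ε₁ ε₂, hm, ?_⟩
    have := hC (shrink hε₁ hm (min_le_left _ _) h₁) (shrink hε₂ hm (min_le_right _ _) h₂) ha hb hab
    convert this using 1
    obtain rfl : b = 1 - a := by linarith
    module
  · rintro u hu v hv y ⟨hy, ε, hε, hz⟩ ⟨a, b, ha, hb, hab, rfl⟩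
    -- The segment from `v` to `x + ε (x - y)` meets the line through `u` and `x` beyond `x`.
    refine ⟨hu, ε * a / (1 + ε * b), by positivity, ?_⟩
    have := hC hz hv (a := 1 / (1 + ε * b)) (b := ε * b / (1 + ε * b))
      (by positivity) (by positivity) (by field_simp)
    convert this using 1
    obtain rfl : a = 1 - b := by linarith
    have : 1 + ε * b ≠ 0 := by positivity
    match_scalars <;> field_simp <;> ring

theorem isFaceOf_sUnion {C : Set V} {c : Set (Set V)} (hc : IsChain (· ⊆ ·) c)
    (hface : ∀ F ∈ c, IsFaceOf C F) : IsFaceOf C (⋃₀ c) := by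
  refine ⟨hc.directedOn.convex_sUnion fun F hF => (hface F hF).1,
    sUnion_subset fun F hF => (hface F hF).2.subset, ?_⟩
  rintro u hu v hv y ⟨F, hF, hy⟩ hyuv
  exact ⟨F, hF, (hface F hF).2.left_mem_of_mem_openSegment hu hv hy hyuv⟩

end Faces

/-- **Lemma 1.** For a nonempty convex set `C ⊆ ℝ^n`, the points of `C` outside its relative
interior form exactly the union of the maximal proper faces of `C`. -/
theorem diff_rint_eq_iUnion_maxProperFaces {n : ℕ} (C : Set (EuclideanSpace ℝ (Fin n)))
    (hne : C.Nonempty) (hconv : Convex ℝ C) :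
    C \ intrinsicInterior ℝ C = ⋃ F ∈ {F | IsMaxProperFace C F}, F := by
  ext x
  simp only [Set.mem_sdiff, mem_iUnion, mem_ofPred_eq, exists_prop]
  constructor
  · rintro ⟨hx, hxr⟩
    obtain ⟨p, hp⟩ := hne.intrinsicInterior hconv
    have hpC : p ∈ C := intrinsicInterior_subset hp
    have hpx : p ∉ pointFace C x := by
      rintro ⟨-, ε, hε, hz⟩
      exact hxr (mem_rint_of_prolongation hconv hε hp hz)
    obtain ⟨F, hxF, hF⟩ := zorn_subset_nonempty {F | IsFaceOf C F ∧ p ∉ F}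
      (fun c hcS hc _ => ⟨⋃₀ c, ⟨isFaceOf_sUnion hc fun F hF => (hcS hF).1,
        fun ⟨F, hF, hpF⟩ => (hcS hF).2 hpF⟩, fun _ => subset_sUnion_of_mem⟩)
      (pointFace C x) ⟨isFaceOf_pointFace hconv hx, hpx⟩
    have hxmem : x ∈ F := hxF (mem_pointFace_self hx)
    refine ⟨F, ⟨hF.prop.1, ⟨x, hxmem⟩, ?_, fun F' hF' _ hsub => ?_⟩, hxmem⟩
    · rintro rfl
      exact hF.prop.2 hpC
    · by_cases hpF' : p ∈ F'
      · exact Or.inl (face_eq_of_mem_rint hF' hp hpF')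
      · exact Or.inr ((hF.eq_of_subset ⟨hF', hpF'⟩ hsub).symm)
  · rintro ⟨F, ⟨hF, -, hFC, -⟩, hxF⟩
    exact ⟨hF.2.subset hxF, fun hxr => hFC (face_eq_of_mem_rint hF hxr hxF)⟩

end
end
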